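/- arXiv:1404.4852 — 3 statements merged into one kernel-verified Lean document; each statement's English description precedes it below -/
import Mathlib

section
/- Let m = p_1^{r_1} p_2^{r_2} ⋯ p_v^{r_v} where p_1, …, p_v are distinct primes and each r_i ≥ 1. Let Q be a polynomial in n ≥ 2 variables over Z_m of total degree d ≥ 1. Then for every k ∈ Z_m, all elements w_1, …, w_v ∈ Z_m, and all natural numbers q_1 ≤ r_1, …, q_v ≤ r_v, the sum Σ_{i_1=0}^{p_1^{q_1}-1} Σ_{i_2=0}^{p_2^{q_2}-1} ⋯ Σ_{i_v=0}^{p_v^{q_v}-1} #(k + Σ_{j=1}^{v} w_j (m/p_j^{q_j}) i_j)_Q is divisible by (∏_{i : r_i = 1} p_i^{⌈n/d⌉ + q_i - 1}) · (∏_{i : r_i > 1} p_i^{⌈r_i n / 2⌉ + q_i - 1}). -/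
/-!
Over `𝔽_p`, the number of non-zeros of `P` is `∑ x, P(x) ^ ((p - 1) * p ^ e)` modulo `p ^ e`, where
`P` is evaluated at Teichmüller representatives. Expanding by the multinomial theorem, a power sum
`∑ u, τ(u) ^ a` can fail to be divisible by `p` only if the base-`p` digit sum of `a` is at least
`p - 1`, and digit sums also give the valuations of the multinomial coefficients. Comparing the two
gives Ax's theorem, the case of modulus `p`.

Modulo `p ^ r`, `P` is expanded around each residue class modulo `p`. If some linear coefficient is
a unit, one variable is a function of the others; otherwise `p ^ 2` can be divided out, and one
inducts on `r`.

The translates of `k` by multiples of `w * (m / p ^ q)` run through a coset of a cyclic subgroup,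
and belonging to such a coset is a condition modulo a smaller power of `p`, so that the sum is
itself a multiple of a number of zeros. The Chinese remainder theorem separates the primes.
-/

namespace MarshallRamage

open Finset

section DigitSums

lemma sub_one_le_digits_sum {p n : ℕ} (hp : 1 < p) (hn : n ≠ 0) (hdvd : p - 1 ∣ n) :
    p - 1 ≤ (p.digits n).sum := by
  refine Nat.le_of_dvd (Nat.pos_of_ne_zero fun h0 ↦ ?_) ?_
  · rw [List.sum_eq_zero_iff] at h0
    exact Nat.getLast_digit_ne_zero p hn (h0 _ (List.getLast_mem _))
  · rcases (show p = 2 ∨ 2 < p by omega) with rfl | hp2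
    · simp
    have hmod : p % (p - 1) = 1 := by
      rw [Nat.mod_eq_sub_mod (by omega), Nat.sub_sub_self hp.le, Nat.mod_eq_of_lt (by omega)]
    exact ((Nat.modEq_digits_sum (p - 1) p hmod n).dvd_iff dvd_rfl).1 hdvd

variable {p : ℕ} [Fact p.Prime] {ι : Type*}

lemma sub_one_mul_padicValNat_multinomial_add_digits_sum (s : Finset ι) (k : ι → ℕ) :
    (p - 1) * padicValNat p (Nat.multinomial s k) + (p.digits (∑ i ∈ s, k i)).sum =
      ∑ i ∈ s, (p.digits (k i)).sum := by
  have legendre (n : ℕ) : (p - 1) * padicValNat p n.factorial + (p.digits n).sum = n := by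
    rw [sub_one_mul_padicValNat_factorial, Nat.sub_add_cancel (Nat.digit_sum_le p n)]
  have hprod : (p - 1) * padicValNat p (∏ i ∈ s, (k i).factorial) + ∑ i ∈ s, (p.digits (k i)).sum =
      ∑ i ∈ s, k i := by
    classical
    induction s using Finset.induction_on with
    | empty => simp
    | insert a s ha ih =>
      have hs : ∏ i ∈ s, (k i).factorial ≠ 0 := prod_ne_zero_iff.2 fun i _ ↦ (k i).factorial_ne_zero
      rw [prod_insert ha, sum_insert ha, sum_insert ha,
        padicValNat.mul (k a).factorial_ne_zero hs, mul_add]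
      linarith [legendre (k a)]
  have hspec := congrArg (padicValNat p) (Nat.multinomial_spec s k)
  rw [padicValNat.mul (prod_ne_zero_iff.2 fun i _ ↦ (k i).factorial_ne_zero)
    (Nat.multinomial_pos s k).ne'] at hspec
  have htotal := legendre (∑ i ∈ s, k i)
  rw [← hspec, mul_add] at htotal
  linarith

lemma digits_sum_sum_le (s : Finset ι) (k : ι → ℕ) :
    (p.digits (∑ i ∈ s, k i)).sum ≤ ∑ i ∈ s, (p.digits (k i)).sum :=
  (Nat.le_add_left _ _).trans_eq (sub_one_mul_padicValNat_multinomial_add_digits_sum s k)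

lemma digits_sum_mul_le (c n : ℕ) : (p.digits (c * n)).sum ≤ c * (p.digits n).sum := by
  simpa using digits_sum_sum_le (p := p) (range c) fun _ ↦ n

end DigitSums

section Teichmuller

open WittVector

variable (p : ℕ) [Fact p.Prime]

lemma sum_teichmuller_pow_eq_zero {K : Type*} [Field K] [Fintype K] [CharP K p] {a : ℕ}
    (ha : ¬ Fintype.card K - 1 ∣ a) : ∑ u : K, teichmuller p u ^ a = 0 := by
  classical
  have ha0 : a ≠ 0 := by rintro rfl; simp at ha
  let χ : Kˣ →* WittVector p K :=
    (powMonoidHom a).comp ((teichmuller p).comp (Units.coeHom K))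
  have hχ : χ ≠ 1 := by
    contrapose! ha
    refine (FiniteField.forall_pow_eq_one_iff K a).1 fun u ↦ Units.ext ?_
    have hu : teichmuller p (u : K) ^ a = 1 := DFunLike.congr_fun ha u
    rw [← map_pow] at hu
    rw [Units.val_pow_eq_pow_val, ← teichmuller_coeff_zero p ((u : K) ^ a), hu, one_coeff_zero,
      Units.val_one]
  rw [← sum_hom_units_eq_zero χ hχ, Fintype.sum_eq_add_sum_subtype_ne _ (0 : K),
    teichmuller_zero, zero_pow ha0, zero_add]
  exact (Fintype.sum_equiv unitsEquivNeZero _ _ fun u ↦ rfl).symm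

lemma exists_pow_dvd_sum_teichmuller_pow (a : ℕ) :
    ∃ v : ℕ, (p : WittVector p (ZMod p)) ^ v ∣ ∑ u : ZMod p, teichmuller p u ^ a ∧
      p - 1 ≤ (p - 1) * v + (p.digits a).sum := by
  by_cases ha : p - 1 ∣ a
  · rcases eq_or_ne a 0 with rfl | ha0
    · exact ⟨1, by simp, by simp⟩
    · exact ⟨0, by simp, by simpa using sub_one_le_digits_sum (Fact.out : p.Prime).one_lt ha0 ha⟩
  · refine ⟨1, ?_, by simp⟩
    rw [sum_teichmuller_pow_eq_zero p (by rwa [ZMod.card])]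
    exact dvd_zero _

variable {p}

lemma natCast_dvd_iff_constantCoeff_eq_zero {w : WittVector p (ZMod p)} :
    (p : WittVector p (ZMod p)) ∣ w ↔ constantCoeff w = 0 := by
  rw [← RingHom.mem_ker, WittVector.ker_constantCoeff, Ideal.mem_span_singleton]

lemma natCast_pow_dvd_natCast_iff {e N : ℕ} :
    (p : WittVector p (ZMod p)) ^ e ∣ (N : WittVector p (ZMod p)) ↔ p ^ e ∣ N := by
  refine ⟨fun h ↦ ?_, fun h ↦ by simpa using Nat.cast_dvd_cast (α := WittVector p (ZMod p)) h⟩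
  have h' := map_dvd (toPadicInt p) h
  rw [map_pow, map_natCast, map_natCast] at h'
  exact_mod_cast (PadicInt.pow_p_dvd_int_iff e N).1 (by exact_mod_cast h')

lemma natCast_pow_dvd_pow_sub_ite (e : ℕ) (w : WittVector p (ZMod p)) :
    (p : WittVector p (ZMod p)) ^ e ∣
      w ^ ((p - 1) * p ^ e) - if constantCoeff w = 0 then 0 else 1 := by
  have hp : p.Prime := Fact.out
  split_ifs with hw
  · rw [sub_zero]
    have he : e ≤ (p - 1) * p ^ e :=
      (Nat.lt_pow_self hp.one_lt).le.trans (Nat.le_mul_of_pos_left _ (by have := hp.two_le; omega))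
    exact (pow_dvd_pow _ he).trans
      (pow_dvd_pow_of_dvd (natCast_dvd_iff_constantCoeff_eq_zero.2 hw) _)
  · have fermat : (p : WittVector p (ZMod p)) ∣ w ^ (p - 1) - 1 := by
      rw [natCast_dvd_iff_constantCoeff_eq_zero, map_sub, map_pow, map_one,
        ZMod.pow_card_sub_one_eq_one hw, sub_self]
    simpa [pow_mul] using (pow_dvd_pow _ e.le_succ).trans (dvd_sub_pow_of_dvd_sub fermat e)

variable {σ : Type*} [Fintype σ]

/-- The value at the Teichmüller representatives of `x` of the polynomial obtained from `P` by
replacing each coefficient by its Teichmüller representative. -/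
noncomputable def teichmullerEval (P : MvPolynomial σ (ZMod p)) (x : σ → ZMod p) :
    WittVector p (ZMod p) :=
  ∑ s ∈ P.support, teichmuller p (P.coeff s) * ∏ i, teichmuller p (x i) ^ s i

lemma constantCoeff_teichmullerEval (P : MvPolynomial σ (ZMod p)) (x : σ → ZMod p) :
    constantCoeff (teichmullerEval P x) = MvPolynomial.eval x P := by
  have hτ (u : ZMod p) : constantCoeff (teichmuller p u) = u := teichmuller_coeff_zero p u
  simp only [teichmullerEval, MvPolynomial.eval_eq', map_sum, map_mul, map_prod, map_pow, hτ]

lemma sum_teichmullerEval_pow [DecidableEq σ] (P : MvPolynomial σ (ZMod p)) (N : ℕ) :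
    ∑ x : σ → ZMod p, teichmullerEval P x ^ N = ∑ k ∈ P.support.piAntidiag N,
      Nat.multinomial P.support k * (∏ s ∈ P.support, teichmuller p (P.coeff s) ^ k s) *
        ∏ i, ∑ u : ZMod p, teichmuller p u ^ ∑ s ∈ P.support, k s * s i := by
  classical
  simp_rw [teichmullerEval, sum_pow_eq_sum_piAntidiag]
  rw [sum_comm]
  refine sum_congr rfl fun k _ ↦ ?_
  rw [Fintype.prod_sum, mul_sum]
  refine sum_congr rfl fun x _ ↦ ?_
  simp_rw [mul_pow, prod_mul_distrib, ← prod_pow, mul_assoc, ← pow_mul, mul_comm (k _)]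
  rw [prod_comm]
  simp_rw [prod_pow_eq_pow_sum]

/-- Here `v i` is a lower bound for the `p`-adic valuation of the `i`-th power sum of Teichmüller
representatives in the expansion of `∑ x, teichmullerEval P x ^ ((p - 1) * p ^ e)`. -/
lemma card_le_of_sum_digits {P : MvPolynomial σ (ZMod p)} {d e : ℕ} (hP : P.totalDegree ≤ d)
    {k : (σ →₀ ℕ) → ℕ} (hk : ∑ s ∈ P.support, k s = (p - 1) * p ^ e) {v : σ → ℕ}
    (hv : ∀ i, p - 1 ≤ (p - 1) * v i + (p.digits (∑ s ∈ P.support, k s * s i)).sum) :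
    Fintype.card σ ≤ ∑ i, v i + d * (padicValNat p (Nat.multinomial P.support k) + 1) := by
  have hp : 1 < p := (Fact.out : p.Prime).one_lt
  have hdigits : (p.digits ((p - 1) * p ^ e)).sum = p - 1 := by
    rw [mul_comm, Nat.digits_base_pow_mul hp (by omega), List.sum_append, List.sum_replicate,
      Nat.digits_of_lt p (p - 1) (by omega) (by omega)]
    simp
  have hval := sub_one_mul_padicValNat_multinomial_add_digits_sum (p := p) P.support k
  rw [hk, hdigits] at hval
  refine le_of_mul_le_mul_left ?_ (by omega : 0 < p - 1)
  calc (p - 1) * Fintype.card σ = ∑ _i : σ, (p - 1) := by simp [mul_comm]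
    _ ≤ ∑ i, ((p - 1) * v i + ∑ s ∈ P.support, s i * (p.digits (k s)).sum) := by
      refine sum_le_sum fun i _ ↦ (hv i).trans (Nat.add_le_add_left ?_ _)
      refine (digits_sum_sum_le _ _).trans (sum_le_sum fun s _ ↦ ?_)
      rw [mul_comm]
      exact digits_sum_mul_le _ _
    _ = (p - 1) * ∑ i, v i + ∑ s ∈ P.support, (∑ i, s i) * (p.digits (k s)).sum := by
      rw [sum_add_distrib, mul_sum, sum_comm]
      simp_rw [sum_mul]
    _ ≤ (p - 1) * ∑ i, v i + ∑ s ∈ P.support, d * (p.digits (k s)).sum := by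
      gcongr with s hs
      exact (s.sum_fintype _ fun _ ↦ rfl).ge.trans ((MvPolynomial.le_totalDegree hs).trans hP)
    _ = (p - 1) * (∑ i, v i + d * (padicValNat p (Nat.multinomial P.support k) + 1)) := by
      rw [← mul_sum, ← hval]
      ring

lemma natCast_pow_dvd_sum_teichmullerEval_pow [DecidableEq σ] {P : MvPolynomial σ (ZMod p)}
    {d e : ℕ} (hd : 0 < d) (hP : P.totalDegree ≤ d) (he : e * d < Fintype.card σ) :
    (p : WittVector p (ZMod p)) ^ e ∣ ∑ x, teichmullerEval P x ^ ((p - 1) * p ^ e) := by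
  classical
  rw [sum_teichmullerEval_pow]
  refine dvd_sum fun k hk ↦ ?_
  choose v hdvd hv using fun i ↦ exists_pow_dvd_sum_teichmuller_pow p (∑ s ∈ P.support, k s * s i)
  set t := padicValNat p (Nat.multinomial P.support k)
  have hcard : Fintype.card σ ≤ ∑ i, v i + d * (t + 1) :=
    card_le_of_sum_digits hP (mem_piAntidiag.1 hk).1 hv
  have hle : e ≤ t + ∑ i, v i := by
    by_contra! hlt
    have hmul : (t + ∑ i, v i + 1) * d ≤ e * d := Nat.mul_le_mul_right d hlt
    have hself : ∑ i, v i ≤ (∑ i, v i) * d := Nat.le_mul_of_pos_right _ hd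
    linarith
  refine (pow_dvd_pow _ hle).trans ?_
  rw [pow_add, ← prod_pow_eq_pow_sum]
  refine mul_dvd_mul (Dvd.dvd.mul_right ?_ _) (prod_dvd_prod_of_dvd _ _ fun i _ ↦ hdvd i)
  exact natCast_pow_dvd_natCast_iff.2 pow_padicValNat_dvd

theorem prime_pow_dvd_card_zeros {P : MvPolynomial σ (ZMod p)} {d e : ℕ} (hd : 0 < d)
    (hP : P.totalDegree ≤ d) (he : e * d < Fintype.card σ) :
    p ^ e ∣ Nat.card {x : σ → ZMod p // MvPolynomial.eval x P = 0} := by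
  classical
  have hnonzeros : p ^ e ∣ Nat.card {x : σ → ZMod p // ¬ MvPolynomial.eval x P = 0} := by
    rw [← natCast_pow_dvd_natCast_iff (p := p),
      ← dvd_sub_right (natCast_pow_dvd_sum_teichmullerEval_pow hd hP he), Nat.card_eq_fintype_card,
      Fintype.card_subtype, card_filter, Nat.cast_sum, ← sum_sub_distrib]
    refine dvd_sum fun x _ ↦ ?_
    have hite := natCast_pow_dvd_pow_sub_ite e (teichmullerEval P x)
    rw [constantCoeff_teichmullerEval] at hite
    simpa using hite
  have htotal : p ^ e ∣ Nat.card (σ → ZMod p) := by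
    rw [Nat.card_eq_fintype_card, Fintype.card_fun, ZMod.card]
    exact pow_dvd_pow p ((Nat.le_mul_of_pos_right e hd).trans he.le)
  rw [← Nat.card_congr (Equiv.sumCompl fun x ↦ MvPolynomial.eval x P = 0), Nat.card_sum] at htotal
  exact (Nat.dvd_add_left hnonzeros).1 htotal

end Teichmuller

section RootCount

open MvPolynomial

variable {σ : Type*}

/-- The number of points `x` in the box `[0, M)^σ` at which the integer polynomial `P` is divisible
by `N`. The box and the modulus are independent, so that both can be rescaled separately. -/
noncomputable def rootCount (M N : ℕ) (P : MvPolynomial σ ℤ) : ℕ :=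
  Nat.card {x : σ → Fin M // (N : ℤ) ∣ eval (fun i ↦ ((x i : ℕ) : ℤ)) P}

lemma natCast_dvd_eval_iff {N : ℕ} {x : σ → ℤ} {P : MvPolynomial σ ℤ} :
    (N : ℤ) ∣ eval x P ↔
      eval (fun i ↦ (x i : ZMod N)) (P.map (Int.castRingHom (ZMod N))) = 0 := by
  rw [← ZMod.intCast_zmod_eq_zero_iff_dvd]
  exact (congrArg (· = 0) (map_eval (Int.castRingHom (ZMod N)) x P)).to_iff

lemma rootCount_congr {M N : ℕ} {P P' : MvPolynomial σ ℤ}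
    (h : P.map (Int.castRingHom (ZMod N)) = P'.map (Int.castRingHom (ZMod N))) :
    rootCount M N P = rootCount M N P' := by
  simp only [rootCount, natCast_dvd_eval_iff, h]

lemma rootCount_self (N : ℕ) [NeZero N] (P : MvPolynomial σ ℤ) :
    rootCount N N P =
      Nat.card {x : σ → ZMod N // eval x (P.map (Int.castRingHom (ZMod N))) = 0} := by
  let e : Fin N ≃ ZMod N :=
    { toFun x := (x : ℕ)
      invFun u := ⟨u.val, u.val_lt⟩
      left_inv x := Fin.ext (ZMod.val_cast_of_lt x.2)
      right_inv u := u.natCast_zmod_val }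
  refine Nat.card_congr ((Equiv.piCongrRight fun _ ↦ e).subtypeEquiv fun x ↦ ?_)
  rw [natCast_dvd_eval_iff]
  simp only [Int.cast_natCast]
  rfl

lemma rootCount_C_mul {a : ℕ} (ha : a ≠ 0) (M N : ℕ) (P : MvPolynomial σ ℤ) :
    rootCount M (a * N) (C (a : ℤ) * P) = rootCount M N P := by
  simp only [rootCount, map_mul, eval_C, Nat.cast_mul,
    mul_dvd_mul_iff_left (Nat.cast_ne_zero.2 ha : (a : ℤ) ≠ 0)]

lemma dvd_rootCount_C_add_C_mul {p k M N : ℕ} (hp : p ≠ 0) {G : MvPolynomial σ ℤ}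
    (h : ∀ c, k ∣ rootCount M N (C c + G)) (c : ℤ) :
    k ∣ rootCount M (p * N) (C c + C (p : ℤ) * G) := by
  by_cases hc : (p : ℤ) ∣ c
  · obtain ⟨c, rfl⟩ := hc
    rw [C_mul, ← mul_add, rootCount_C_mul hp]
    exact h c
  · have hempty : rootCount M (p * N) (C c + C (p : ℤ) * G) = 0 := by
      rw [rootCount, Nat.card_eq_zero]
      refine Or.inl ⟨fun x ↦ hc ?_⟩
      have hx := (Dvd.intro _ (Nat.cast_mul p N).symm).trans x.2
      rwa [map_add, map_mul, eval_C, eval_C, dvd_add_left (dvd_mul_right _ _)] at hx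
    exact hempty ▸ dvd_zero k

/-- Coordinatewise Euclidean division by `b` of the points of the box `[0, ab)^σ`. -/
def boxEquiv (σ : Type*) (a b : ℕ) : (σ → Fin b) × (σ → Fin a) ≃ (σ → Fin (a * b)) :=
  (Equiv.prodComm _ _).trans ((Equiv.arrowProdEquivProdArrow σ _ _).symm.trans
    (Equiv.piCongrRight fun _ ↦ finProdFinEquiv))

lemma boxEquiv_apply {a b : ℕ} (yz : (σ → Fin b) × (σ → Fin a)) (i : σ) :
    ((boxEquiv σ a b yz i : ℕ) : ℤ) = (yz.1 i : ℕ) + b * (yz.2 i : ℕ) := by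
  simp [boxEquiv, Equiv.arrowProdEquivProdArrow]

lemma rootCount_mul [Fintype σ] [DecidableEq σ] (a b N : ℕ) (P : MvPolynomial σ ℤ) :
    rootCount (a * b) N P = ∑ y : σ → Fin b,
      rootCount a N (bind₁ (fun i ↦ C ((y i : ℕ) : ℤ) + C (b : ℤ) * X i) P) := by
  simp only [rootCount]
  rw [← Nat.card_sigma]
  refine Nat.card_congr (((boxEquiv σ a b).symm.subtypeEquiv fun x ↦ ?_).trans
    (Equiv.subtypeProdEquivSigmaSubtype fun (y : σ → Fin b) (z : σ → Fin a) ↦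
      (N : ℤ) ∣ eval (fun i ↦ ((z i : ℕ) : ℤ))
        (bind₁ (fun i ↦ C ((y i : ℕ) : ℤ) + C (b : ℤ) * X i) P)))
  obtain ⟨yz, rfl⟩ := (boxEquiv σ a b).surjective x
  rw [Equiv.symm_apply_apply, ← aeval_eq_eval, ← aeval_eq_eval]
  simp [boxEquiv_apply, aeval_bind₁]

lemma rootCount_mul_self [Fintype σ] (a N : ℕ) (P : MvPolynomial σ ℤ) :
    rootCount (a * N) N P = a ^ Fintype.card σ * rootCount N N P := by
  have hcard : Nat.card (σ → Fin a) = a ^ Fintype.card σ := by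
    classical simp [Nat.card_eq_fintype_card]
  rw [← hcard, mul_comm (Nat.card _), rootCount, rootCount, ← Nat.card_prod]
  refine Nat.card_congr (((boxEquiv σ a N).symm.subtypeEquiv fun x ↦ ?_).trans
    (Equiv.prodSubtypeFstEquivSubtypeProd
      (p := fun y : σ → Fin N ↦ (N : ℤ) ∣ eval (fun i ↦ ((y i : ℕ) : ℤ)) P)))
  obtain ⟨yz, rfl⟩ := (boxEquiv σ a N).surjective x
  simp [boxEquiv_apply, natCast_dvd_eval_iff]

end RootCount

section Taylor

open MvPolynomial

variable {σ R : Type*} [CommRing R]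

lemma dvd_eval_sub_eval {t : R} {x y : σ → R} (h : ∀ i, t ∣ x i - y i) (P : MvPolynomial σ R) :
    t ∣ eval x P - eval y P := by
  simp only [← Ideal.mem_span_singleton, ← Ideal.Quotient.eq, map_eval] at h ⊢
  exact congrArg (eval · _) (funext h)

lemma exists_bind₁_eq_taylor [Fintype σ] (t : R) (y : σ → R)
    (P : MvPolynomial σ R) :
    ∃ (a : σ → R) (q H : MvPolynomial σ R), q.totalDegree ≤ 2 ∧
      bind₁ (fun i ↦ C (y i) + C t * X i) P =
        C (eval y P) + C t * (∑ i, C (a i) * X i + C t * (q + C t * H)) := by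
  classical
  induction P using MvPolynomial.induction_on with
  | C c => exact ⟨0, 0, 0, by simp, by simp⟩
  | add P P' hP hP' =>
    obtain ⟨a, q, H, hq, h⟩ := hP
    obtain ⟨a', q', H', hq', h'⟩ := hP'
    refine ⟨a + a', q + q', H + H', (totalDegree_add _ _).trans (max_le hq hq'), ?_⟩
    simp only [map_add, h, h', Pi.add_apply, add_mul, sum_add_distrib]
    ring
  | mul_X P j hP =>
    obtain ⟨a, q, H, hq, h⟩ := hP
    refine ⟨y j • a + Pi.single j (eval y P), C (y j) * q + (∑ i, C (a i) * X i) * X j,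
      C (y j) * H + X j * q + C t * X j * H, ?_, ?_⟩
    · have hC : (C (y j) * q).totalDegree ≤ 2 := (totalDegree_mul _ _).trans (by simpa using hq)
      have hquad : ((∑ i, C (a i) * X i) * X j).IsHomogeneous 2 :=
        (IsHomogeneous.sum _ _ 1 fun i _ ↦ isHomogeneous_C_mul_X (a i) i).mul (isHomogeneous_X R j)
      exact (totalDegree_add _ _).trans (max_le hC hquad.totalDegree_le)
    · have hsingle : ∑ i, C (Pi.single j (eval y P) i) * X i = C (eval y P) * X j := by
        rw [sum_eq_single j] <;> simp +contextual
      simp only [map_mul, map_add, h, bind₁_X_right, Pi.add_apply, Pi.smul_apply, smul_eq_mul,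
        add_mul, sum_add_distrib, hsingle, eval_X, mul_assoc, ← mul_sum]
      ring

end Taylor

section Nonsingular

open MvPolynomial

variable {σ : Type*} [Fintype σ]

lemma card_fiber_of_injective_update {R : Type*} [Finite R] [DecidableEq σ]
    {f : (σ → R) → R} (i₀ : σ)
    (hf : ∀ x, Function.Injective fun u ↦ f (Function.update x i₀ u)) (c : R) :
    Nat.card {x // f x = c} = Nat.card R ^ (Fintype.card σ - 1) := by
  have hcard : Nat.card ({j // j ≠ i₀} → R) = Nat.card R ^ (Fintype.card σ - 1) := by
    rw [Nat.card_fun, Nat.card_eq_fintype_card (α := {j // j ≠ i₀})]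
    simp
  rw [← hcard]
  refine Nat.card_eq_of_bijective (fun x j ↦ x.1 j) ⟨fun x x' h ↦ Subtype.ext ?_, fun y ↦ ?_⟩
  · have hx : x'.1 = Function.update x.1 i₀ (x'.1 i₀) :=
      Function.eq_update_iff.2 ⟨rfl, fun j hj ↦ (congrFun h ⟨j, hj⟩).symm⟩
    rw [hx, ← hf x.1 (a₁ := x.1 i₀) (a₂ := x'.1 i₀) ?_, Function.update_eq_self]
    simp only
    rw [Function.update_eq_self, ← hx, x.2, x'.2]
  · obtain ⟨u, hu⟩ := (Finite.injective_iff_surjective.1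
      (hf fun j ↦ if hj : j ≠ i₀ then y ⟨j, hj⟩ else c)) c
    refine ⟨⟨_, hu⟩, funext fun j ↦ ?_⟩
    simp [j.2]

lemma card_zeros_of_isUnit_linear_coeff {R : Type*} [CommRing R] [Finite R] {a : σ → R} {i₀ : σ}
    (ha : IsUnit (a i₀)) {t : R} (ht : IsNilpotent t) (c : R) (G : MvPolynomial σ R) :
    Nat.card {x : σ → R // eval x (C c + (∑ i, C (a i) * X i + C t * G)) = 0} =
      Nat.card R ^ (Fintype.card σ - 1) := by
  classical
  refine card_fiber_of_injective_update i₀ (fun x u u' h ↦ ?_) 0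
  have hdvd (i : σ) : u - u' ∣ Function.update x i₀ u i - Function.update x i₀ u' i := by
    rcases eq_or_ne i i₀ with rfl | hi <;> simp [*]
  obtain ⟨g, hg⟩ := dvd_eval_sub_eval hdvd G
  have hlin : ∑ i, a i * Function.update x i₀ u i - ∑ i, a i * Function.update x i₀ u' i =
      a i₀ * (u - u') := by
    rw [← sum_sub_distrib, sum_eq_single i₀] <;> simp +contextual [mul_sub]
  simp only [map_add, map_sum, map_mul, eval_C, eval_X] at h
  have hunit : IsUnit (a i₀ + t * g) :=
    IsNilpotent.isUnit_add_left_of_commute ((Commute.all t g).isNilpotent_mul_right ht) ha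
      (Commute.all _ _)
  refine sub_eq_zero.1 (hunit.mul_right_eq_zero.1 ?_)
  linear_combination h - hlin - t * hg

end Nonsingular

section PrimePowers

open MvPolynomial

variable {p : ℕ} [Fact p.Prime] {σ : Type*} [Fintype σ]

lemma rootCount_of_not_dvd_linear_coeff {a : σ → ℤ} {i₀ : σ}
    (ha : ¬ (p : ℤ) ∣ a i₀) (s : ℕ) (c : ℤ) (G : MvPolynomial σ ℤ) :
    rootCount (p ^ s) (p ^ s) (C c + (∑ i, C (a i) * X i + C (p : ℤ) * G)) =
      p ^ (s * (Fintype.card σ - 1)) := by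
  have : NeZero (p ^ s) := ⟨(pow_pos (Fact.out : p.Prime).pos s).ne'⟩
  have hunit : IsUnit (a i₀ : ZMod (p ^ s)) := by
    refine (ZMod.coe_int_isUnit_iff_isCoprime _ _).2 ?_
    rw [Nat.cast_pow]
    exact ((Nat.prime_iff_prime_int.1 Fact.out).coprime_iff_not_dvd.2 ha).pow_left
  have hnil : IsNilpotent (p : ZMod (p ^ s)) := ⟨s, by rw [← Nat.cast_pow, ZMod.natCast_self]⟩
  rw [rootCount_self, pow_mul]
  simpa using card_zeros_of_isUnit_linear_coeff (a := fun i ↦ (a i : ZMod (p ^ s))) hunit hnil c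
    (G.map (Int.castRingHom _))

lemma pow_dvd_rootCount_prime {P : MvPolynomial σ ℤ} {d e : ℕ} (hd : 0 < d)
    (hP : P.totalDegree ≤ d) (he : e * d < Fintype.card σ) : p ^ e ∣ rootCount p p P := by
  rw [rootCount_self]
  exact prime_pow_dvd_card_zeros hd ((sup_mono (support_map_subset _ P)).trans hP) he

/-- The residue classes modulo `p` at which the polynomial is singular. Dividing by `p ^ 2` lowers
the exponent by two; if this leaves the exponent `u = 1`, which the induction does not cover, the
Taylor expansion modulo `p` has degree at most two and Ax's theorem applies. -/
lemma pow_dvd_rootCount_of_dvd_linear_coeff {u : ℕ} {a : σ → ℤ} (ha : ∀ i, (p : ℤ) ∣ a i)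
    {q : MvPolynomial σ ℤ} (hq : q.totalDegree ≤ 2) (hσ : Fintype.card σ ≠ 0)
    (ih : u ≠ 1 → ∀ P : MvPolynomial σ ℤ,
      p ^ ((u * Fintype.card σ + 1) / 2 - 1) ∣ rootCount (p ^ u) (p ^ u) P)
    (H : MvPolynomial σ ℤ) (c : ℤ) :
    p ^ (((u + 2) * Fintype.card σ + 1) / 2 - 1) ∣ rootCount (p ^ (u + 1)) (p ^ (u + 1))
      (C c + (∑ i, C (a i) * X i + C (p : ℤ) * (q + C (p : ℤ) * H))) := by
  choose b hb using ha
  have hlin : ∑ i, C (a i) * X i = C (p : ℤ) * ∑ i, C (b i) * X i := by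
    simp only [hb, C_mul, mul_assoc, mul_sum]
  rw [hlin, ← mul_add, pow_succ' p u]
  refine dvd_rootCount_C_add_C_mul (Fact.out : p.Prime).ne_zero (fun c ↦ ?_) c
  have hu : p ^ ((u * Fintype.card σ + 1) / 2 - 1) ∣
      rootCount (p ^ u) (p ^ u) (C c + (∑ i, C (b i) * X i + (q + C (p : ℤ) * H))) := by
    rcases eq_or_ne u 1 with rfl | hu
    · rw [pow_one]
      have hlinear : (∑ i, C (b i) * X i).totalDegree ≤ 1 :=
        (IsHomogeneous.sum _ _ 1 fun i _ ↦ isHomogeneous_C_mul_X (b i) i).totalDegree_le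
      have hmod : (C c + (∑ i, C (b i) * X i + (q + C (p : ℤ) * H))).map
          (Int.castRingHom (ZMod p)) =
          (C c + (∑ i, C (b i) * X i + q)).map (Int.castRingHom (ZMod p)) := by simp
      rw [rootCount_congr hmod]
      refine pow_dvd_rootCount_prime two_pos ?_ (by omega)
      refine (totalDegree_add _ _).trans (max_le ((totalDegree_C c).trans_le zero_le_two)
        ((totalDegree_add _ _).trans ?_))
      exact max_le (hlinear.trans one_le_two) hq
    · exact ih hu _
  rw [rootCount_mul_self]
  refine (pow_dvd_pow p ?_).trans ((pow_add p _ _).dvd.trans (mul_dvd_mul_left _ hu))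
  rw [add_mul]
  omega

theorem pow_dvd_rootCount_prime_pow (hσ : 2 ≤ Fintype.card σ) {r : ℕ} (hr : r ≠ 1)
    (P : MvPolynomial σ ℤ) :
    p ^ ((r * Fintype.card σ + 1) / 2 - 1) ∣ rootCount (p ^ r) (p ^ r) P := by
  classical
  induction r using Nat.strong_induction_on generalizing P with
  | h r ih =>
  obtain rfl | ⟨u, rfl⟩ : r = 0 ∨ ∃ u, r = u + 2 := by
    rcases r with _ | _ | u
    exacts [.inl rfl, absurd rfl hr, .inr ⟨u, rfl⟩]
  · simp
  have hnonsing : ((u + 2) * Fintype.card σ + 1) / 2 - 1 ≤ (u + 1) * (Fintype.card σ - 1) := by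
    obtain ⟨n, hn⟩ := Nat.exists_eq_add_of_le' hσ
    have : (u + 2) * (n + 2) ≤ 2 * ((u + 1) * (n + 1) + 1) := by nlinarith
    rw [hn, show n + 2 - 1 = n + 1 by omega]
    omega
  have hsplit : rootCount (p ^ (u + 2)) (p ^ (u + 2)) P =
      rootCount (p ^ (u + 1) * p) (p * p ^ (u + 1)) P := by rw [← pow_succ, ← pow_succ']
  rw [hsplit, rootCount_mul]
  refine dvd_sum fun y _ ↦ ?_
  obtain ⟨a, q, H, hq, htaylor⟩ := exists_bind₁_eq_taylor (p : ℤ) (fun i ↦ ((y i : ℕ) : ℤ)) P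
  rw [htaylor]
  refine dvd_rootCount_C_add_C_mul (Fact.out : p.Prime).ne_zero (fun c ↦ ?_) _
  by_cases ha : ∀ i, (p : ℤ) ∣ a i
  · exact pow_dvd_rootCount_of_dvd_linear_coeff ha hq (by omega)
      (fun hu ↦ ih u (by omega) hu) H c
  · obtain ⟨i₀, hi₀⟩ := not_forall.1 ha
    rw [rootCount_of_not_dvd_linear_coeff hi₀]
    exact pow_dvd_pow p hnonsing

end PrimePowers

section CyclicGroups

variable {G : Type*} [AddGroup G]

lemma mem_zmultiples_iff_addOrderOf_nsmul_eq_zero [Finite G] [IsAddCyclic G] {c g : G} :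
    g ∈ AddSubgroup.zmultiples c ↔ addOrderOf c • g = 0 := by
  classical
  have : Fintype G := .ofFinite G
  have himp {g : G} (hg : g ∈ AddSubgroup.zmultiples c) : addOrderOf c • g = 0 :=
    addOrderOf_dvd_iff_nsmul_eq_zero.1 (addOrderOf_dvd_of_mem_zmultiples hg)
  have heq : (AddSubgroup.zmultiples c : Set G).toFinset =
      ({g | addOrderOf c • g = 0} : Finset G) :=
    eq_of_subset_of_card_le (fun _ hg ↦ (mem_filter_univ _).2 (himp (Set.mem_toFinset.1 hg))) <| by
      rw [Set.toFinset_card]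
      exact (IsAddCyclic.card_nsmul_eq_zero_le (addOrderOf_pos c)).trans_eq
        Fintype.card_zmultiples.symm
  simpa using Finset.ext_iff.1 heq g

lemma sum_card_fiber_nsmul {X : Type*} [Finite X] (f : X → G) {c : G} (hc : IsOfFinAddOrder c)
    (a : ℕ) :
    ∑ i : Fin (a * addOrderOf c), Nat.card {x // f x = (i : ℕ) • c} =
      a * Nat.card {x // f x ∈ AddSubgroup.zmultiples c} := by
  have : Finite (AddSubgroup.zmultiples c) := .of_equiv _ (finEquivZMultiples hc)
  have : Fintype (AddSubgroup.zmultiples c) := .ofFinite _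
  calc ∑ i : Fin (a * addOrderOf c), Nat.card {x // f x = (i : ℕ) • c}
      = ∑ z : Fin a × Fin (addOrderOf c), Nat.card {x // f x = (z.2 : ℕ) • c} := by
        rw [← finProdFinEquiv.sum_comp]
        simp [add_nsmul, mul_nsmul, addOrderOf_nsmul_eq_zero]
    _ = a * ∑ i : Fin (addOrderOf c), Nat.card {x // f x = (i : ℕ) • c} := by
        simp [Fintype.sum_prod_type]
    _ = a * ∑ g : AddSubgroup.zmultiples c, Nat.card {x // f x = g} := by
        rw [← (finEquivZMultiples hc).sum_comp]
        rfl
    _ = a * Nat.card {x // f x ∈ AddSubgroup.zmultiples c} := by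
        rw [← Nat.card_sigma,
          Nat.card_congr (Equiv.sigmaSubtypeFiberEquivSubtype f fun _ ↦ Iff.rfl)]

end CyclicGroups

section LocalFactors

open MvPolynomial

lemma exists_map_eq_totalDegree_le {σ R S : Type*} [CommSemiring R] [CommSemiring S] {f : R →+* S}
    (hf : Function.Surjective f) (Q : MvPolynomial σ S) :
    ∃ P : MvPolynomial σ R, P.map f = Q ∧ P.totalDegree ≤ Q.totalDegree := by
  choose g hg using hf
  refine ⟨∑ s ∈ Q.support, monomial s (g (Q.coeff s)), ?_, ?_⟩
  · simp only [map_sum, map_monomial, hg]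
    exact Q.as_sum.symm
  · exact totalDegree_finsetSum_le fun s hs ↦
      (totalDegree_monomial_le _ _).trans (le_totalDegree hs)

variable {p : ℕ} [Fact p.Prime] {σ : Type*} [Fintype σ]

lemma exists_sum_card_translates_eq {r q : ℕ} (hqr : q ≤ r) {c : ZMod (p ^ r)}
    (hc : p ^ q • c = 0) (Q : MvPolynomial σ (ZMod (p ^ r))) (k : ZMod (p ^ r)) :
    ∃ t ≤ q, ∃ P : MvPolynomial σ ℤ, P.totalDegree ≤ Q.totalDegree ∧
      ∑ i : Fin (p ^ q), Nat.card {x : σ → ZMod (p ^ r) // eval x Q = k + c * (i : ℕ)} =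
        p ^ (q - t + t * Fintype.card σ) * rootCount (p ^ (r - t)) (p ^ (r - t)) P := by
  have hp : p.Prime := Fact.out
  have : NeZero (p ^ r) := ⟨(pow_pos hp.pos r).ne'⟩
  obtain ⟨t, htq, ht⟩ := (Nat.dvd_prime_pow hp).1 (addOrderOf_dvd_iff_nsmul_eq_zero.2 hc)
  obtain ⟨P, hPQ, hdeg⟩ := exists_map_eq_totalDegree_le
    (f := Int.castRingHom (ZMod (p ^ r))) ZMod.intCast_surjective (Q - C k)
  refine ⟨t, htq, P, hdeg.trans ((totalDegree_sub _ _).trans (by simp)), ?_⟩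
  have hzmultiples (x : σ → ZMod (p ^ r)) : eval x Q - k ∈ AddSubgroup.zmultiples c ↔
      eval x ((C ((p ^ t : ℕ) : ℤ) * P).map (Int.castRingHom (ZMod (p ^ r)))) = 0 := by
    rw [mem_zmultiples_iff_addOrderOf_nsmul_eq_zero, ht, nsmul_eq_mul, map_mul, hPQ]
    simp
  have hq : p ^ q = p ^ (q - t) * addOrderOf c := by rw [ht, ← pow_add, Nat.sub_add_cancel htq]
  have hr : p ^ r = p ^ t * p ^ (r - t) := by
    rw [← pow_add, Nat.add_sub_cancel' (htq.trans hqr)]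
  calc ∑ i : Fin (p ^ q), Nat.card {x : σ → ZMod (p ^ r) // eval x Q = k + c * (i : ℕ)}
      = p ^ (q - t) *
          Nat.card {x : σ → ZMod (p ^ r) // eval x Q - k ∈ AddSubgroup.zmultiples c} := by
        rw [hq, ← sum_card_fiber_nsmul _ (isOfFinAddOrder_of_finite c)]
        simp only [sub_eq_iff_eq_add', nsmul_eq_mul, mul_comm c]
    _ = p ^ (q - t) * rootCount (p ^ r) (p ^ r) (C ((p ^ t : ℕ) : ℤ) * P) := by
        simp only [rootCount_self, hzmultiples]
    _ = p ^ (q - t) * rootCount (p ^ t * p ^ (r - t)) (p ^ (r - t)) P := by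
        nth_rw 2 [hr]
        rw [rootCount_C_mul (pow_pos hp.pos t).ne', ← hr]
    _ = p ^ (q - t + t * Fintype.card σ) * rootCount (p ^ (r - t)) (p ^ (r - t)) P := by
        rw [rootCount_mul_self, pow_add, pow_mul, mul_assoc]

theorem pow_dvd_sum_card_translates_of_eq_one {r q d : ℕ} (hr : r = 1) (hqr : q ≤ r)
    (hσ : 0 < Fintype.card σ) (hd : 0 < d) {c : ZMod (p ^ r)} (hc : p ^ q • c = 0)
    {Q : MvPolynomial σ (ZMod (p ^ r))} (hQ : Q.totalDegree ≤ d) (k : ZMod (p ^ r)) :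
    p ^ ((Fintype.card σ + d - 1) / d + q - 1) ∣
      ∑ i : Fin (p ^ q), Nat.card {x : σ → ZMod (p ^ r) // eval x Q = k + c * (i : ℕ)} := by
  obtain ⟨t, htq, P, hP, hsum⟩ := exists_sum_card_translates_eq hqr hc Q k
  rw [hsum]
  have hceil_pos : 1 ≤ (Fintype.card σ + d - 1) / d := (Nat.le_div_iff_mul_le hd).2 (by omega)
  rcases t.eq_zero_or_pos with rfl | ht
  · have hceil : ((Fintype.card σ + d - 1) / d - 1) * d < Fintype.card σ := by
      have := Nat.div_mul_le_self (Fintype.card σ + d - 1) d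
      rw [Nat.sub_one_mul]
      omega
    rw [hr, Nat.sub_zero, pow_one]
    refine (pow_dvd_pow p ?_).trans ((pow_add p _ _).dvd.trans
      (mul_dvd_mul_left _ (pow_dvd_rootCount_prime hd (hP.trans hQ) hceil)))
    omega
  · have hceil_le : (Fintype.card σ + d - 1) / d ≤ Fintype.card σ := by
      refine Nat.div_le_of_le_mul ?_
      obtain ⟨d, rfl⟩ := Nat.exists_eq_add_of_le' hd
      have := Nat.le_mul_of_pos_right d hσ
      rw [add_mul]
      omega
    obtain rfl : t = 1 := by omega
    exact (pow_dvd_pow p (by omega)).mul_right _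

theorem pow_dvd_sum_card_translates_of_one_lt {r q : ℕ} (hr : 1 < r) (hqr : q ≤ r)
    (hσ : 2 ≤ Fintype.card σ) {c : ZMod (p ^ r)} (hc : p ^ q • c = 0)
    (Q : MvPolynomial σ (ZMod (p ^ r))) (k : ZMod (p ^ r)) :
    p ^ ((r * Fintype.card σ + 1) / 2 + q - 1) ∣
      ∑ i : Fin (p ^ q), Nat.card {x : σ → ZMod (p ^ r) // eval x Q = k + c * (i : ℕ)} := by
  obtain ⟨t, htq, P, -, hsum⟩ := exists_sum_card_translates_eq hqr hc Q k
  obtain ⟨s, rfl⟩ := Nat.exists_eq_add_of_le' (htq.trans hqr)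
  rw [hsum, Nat.add_sub_cancel, add_mul]
  rcases eq_or_ne s 1 with rfl | hs
  · obtain ⟨t, rfl⟩ := Nat.exists_eq_add_of_le' (show 1 ≤ t by omega)
    have htσ : t * 2 ≤ t * Fintype.card σ := Nat.mul_le_mul_left t hσ
    rw [add_mul]
    exact (pow_dvd_pow p (by omega)).mul_right _
  · have htσ : t * 2 ≤ t * Fintype.card σ := Nat.mul_le_mul_left t hσ
    refine (pow_dvd_pow p ?_).trans ((pow_add p _ _).dvd.trans
      (mul_dvd_mul_left _ (pow_dvd_rootCount_prime_pow hσ hs P)))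
    omega

end LocalFactors

section ChineseRemainder

open MvPolynomial

variable {ι σ R : Type*} [Fintype ι] {S : ι → Type*} [CommRing R] [∀ j, CommRing (S j)]

lemma card_fiber_eval_eq_prod (e : R ≃+* ∀ j, S j) (Q : MvPolynomial σ R) (c : R) :
    Nat.card {x : σ → R // eval x Q = c} =
      ∏ j, Nat.card {x : σ → S j // eval x (Q.map ((Pi.evalRingHom S j).comp e)) = e c j} := by
  let E : (σ → R) ≃ ∀ j, σ → S j := (Equiv.piCongrRight fun _ ↦ e.toEquiv).trans (Equiv.piComm _)
  let B (j : ι) (y : σ → S j) : Prop := eval y (Q.map ((Pi.evalRingHom S j).comp e)) = e c j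
  have hE (x : σ → R) : eval x Q = c ↔ ∀ j, B j (E x j) := by
    rw [← e.injective.eq_iff, funext_iff]
    exact forall_congr' fun j ↦
      (congrArg (· = e c j) (map_eval ((Pi.evalRingHom S j).comp e.toRingHom) x Q)).to_iff
  calc Nat.card {x : σ → R // eval x Q = c}
      = Nat.card {y : ∀ j, σ → S j // ∀ j, B j (y j)} := Nat.card_congr (E.subtypeEquiv hE)
    _ = Nat.card (∀ j, {y : σ → S j // B j y}) := Nat.card_congr Equiv.subtypePiEquivPi
    _ = ∏ j, Nat.card {y : σ → S j // B j y} := Nat.card_pi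

lemma sum_card_translates_eq_prod [DecidableEq ι] (e : R ≃+* ∀ j, S j) (Q : MvPolynomial σ R)
    (k : R) {u : ι → R} (hu : ∀ j l, l ≠ j → e (u l) j = 0) (N : ι → ℕ) :
    ∑ i : (∀ j, Fin (N j)), Nat.card {x : σ → R // eval x Q = k + ∑ j, u j * (i j : ℕ)} =
      ∏ j, ∑ i : Fin (N j), Nat.card {x : σ → S j //
        eval x (Q.map ((Pi.evalRingHom S j).comp e)) = e k j + e (u j) j * (i : ℕ)} := by
  rw [Fintype.prod_sum]
  refine sum_congr rfl fun i _ ↦ ?_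
  have hcomponent (j : ι) : e (k + ∑ l, u l * (i l : ℕ)) j = e k j + e (u j) j * (i j : ℕ) := by
    simp only [map_add, map_sum, map_mul, map_natCast, Pi.add_apply, Finset.sum_apply,
      Pi.mul_apply, Pi.natCast_apply]
    rw [sum_eq_single j (fun l _ hl ↦ by rw [hu j l hl, zero_mul]) (by simp)]
  rw [card_fiber_eval_eq_prod e]
  simp only [hcomponent]

lemma dvd_prod_div_of_ne {M : ι → ℕ} {j l : ι} (hjl : l ≠ j) {a : ℕ} (ha : a ∣ M l) :
    M j ∣ (∏ i, M i) / a := by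
  classical
  refine Nat.dvd_div_of_mul_dvd ?_
  rw [← mul_prod_erase univ M (mem_univ l)]
  exact mul_dvd_mul ha (dvd_prod_of_mem M (mem_erase.2 ⟨hjl.symm, mem_univ j⟩))

lemma prodEquivPi_mul_prod_div_apply_of_ne {M : ι → ℕ}
    (hM : Pairwise (Function.onFun Nat.Coprime M)) {j l : ι} (hjl : l ≠ j) {a : ℕ} (ha : a ∣ M l)
    (w : ZMod (∏ i, M i)) :
    ZMod.prodEquivPi M hM (w * ((∏ i, M i) / a : ℕ)) j = 0 := by
  rw [map_mul, map_natCast, Pi.mul_apply, Pi.natCast_apply,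
    (ZMod.natCast_eq_zero_iff _ _).2 (dvd_prod_div_of_ne hjl ha), mul_zero]

lemma nsmul_prodEquivPi_mul_prod_div_apply {M : ι → ℕ}
    (hM : Pairwise (Function.onFun Nat.Coprime M)) (j : ι) {a : ℕ} (ha : a ∣ M j)
    (w : ZMod (∏ i, M i)) :
    a • ZMod.prodEquivPi M hM (w * ((∏ i, M i) / a : ℕ)) j = 0 := by
  rw [← Pi.smul_apply, ← map_nsmul, nsmul_eq_mul, mul_left_comm, ← Nat.cast_mul,
    Nat.mul_div_cancel' (ha.trans (dvd_prod_of_mem M (mem_univ j))), ZMod.natCast_self, mul_zero,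
    map_zero, Pi.zero_apply]

end ChineseRemainder

end MarshallRamage

/-- Extension of Ax's theorem by Marshall and Ramage, with an additional symmetry:
for `m = ∏ pᵢ^{rᵢ}` (distinct primes), a polynomial `Q` in `n ≥ 2` variables of total
degree `d ≥ 1` over `ℤ/m`, the indicated sum of solution counts is divisible by
`∏_{rᵢ=1} pᵢ^{⌈n/d⌉+qᵢ-1} · ∏_{rᵢ>1} pᵢ^{⌈rᵢn/2⌉+qᵢ-1}`. -/
theorem stmt_0 (v : ℕ) (p r : Fin v → ℕ)
    (hp : ∀ i, (p i).Prime) (hpinj : Function.Injective p)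
    (hr : ∀ i, 1 ≤ r i)
    (m : ℕ) (hm : m = ∏ i, p i ^ r i)
    (n d : ℕ) (hn : 2 ≤ n) (hd : 1 ≤ d)
    (Q : MvPolynomial (Fin n) (ZMod m)) (hQ : Q.totalDegree = d)
    (k : ZMod m) (w : Fin v → ZMod m) (q : Fin v → ℕ) (hq : ∀ i, q i ≤ r i) :
    ((∏ i ∈ Finset.univ.filter (fun i => r i = 1), p i ^ ((n + d - 1) / d + q i - 1)) *
     (∏ i ∈ Finset.univ.filter (fun i => 1 < r i), p i ^ ((r i * n + 1) / 2 + q i - 1))) ∣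
    ∑ i : (j : Fin v) → Fin (p j ^ q j),
      Nat.card {x : Fin n → ZMod m //
        MvPolynomial.eval x Q =
          k + ∑ j, w j * ((m / p j ^ q j : ℕ) : ZMod m) * ((i j : ℕ) : ZMod m)} := by
  have (j : Fin v) : Fact (p j).Prime := ⟨hp j⟩
  have hcoprime : Pairwise (Function.onFun Nat.Coprime fun j ↦ p j ^ r j) := fun i j hij ↦
    Nat.Coprime.pow _ _ ((Nat.coprime_primes (hp i) (hp j)).2 (hpinj.ne hij))
  subst hm
  have hdvd (j : Fin v) : p j ^ q j ∣ p j ^ r j := pow_dvd_pow _ (hq j)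
  have hlt_one : Finset.univ.filter (1 < r ·) = Finset.univ.filter (¬ r · = 1) :=
    Finset.filter_congr fun i _ ↦ by have := hr i; omega
  rw [MarshallRamage.sum_card_translates_eq_prod (ZMod.prodEquivPi _ hcoprime) Q k fun j l hl ↦
      MarshallRamage.prodEquivPi_mul_prod_div_apply_of_ne hcoprime hl (hdvd l) (w l),
    ← Finset.prod_filter_mul_prod_filter_not Finset.univ fun j ↦ r j = 1, ← hlt_one]
  have htorsion (j : Fin v) :=
    MarshallRamage.nsmul_prodEquivPi_mul_prod_div_apply hcoprime j (hdvd j) (w j)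
  refine mul_dvd_mul (Finset.prod_dvd_prod_of_dvd _ _ fun j hj ↦ ?_)
    (Finset.prod_dvd_prod_of_dvd _ _ fun j hj ↦ ?_)
  · simpa using MarshallRamage.pow_dvd_sum_card_translates_of_eq_one (Finset.mem_filter.1 hj).2
      (hq j) (by rw [Fintype.card_fin]; omega) hd (htorsion j)
      ((Finset.sup_mono (MvPolynomial.support_map_subset _ Q)).trans hQ.le) _
  · have h := MarshallRamage.pow_dvd_sum_card_translates_of_one_lt (Finset.mem_filter.1 hj).2
      (hq j) (hn.trans_eq (Fintype.card_fin n).symm) (htorsion j)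
    rw [Fintype.card_fin] at h
    exact h _ _
end

section
/- Let p be a prime, let r ≥ 2, and let Q be a polynomial in n ≥ 2 variables over Z_{p^r}. Then for every k ∈ Z_{p^r}, every w ∈ Z_{p^r}, and every natural number q ≤ r, the sum Σ_{i=0}^{p^q - 1} #(k + w p^{r-q} i)_Q is divisible by p^{⌈rn/2⌉ + q - 1}. -/
/-!
As `i` varies, `k + w p^(r-q) i` runs through a coset of the subgroup of `ZMod (p ^ r)` killed by
some `p^t`, hitting each element equally often. Hence the sum is a power of `p` times the number of
zeros of `p^t (Q - k)` modulo `p^r`, that is, of `Q - k` modulo `p^(r-t)`.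

Zeros `a + p X` modulo `p^m` are counted one residue class `a` at a time. If some partial derivative
at `a` is prime to `p`, Hensel's lemma gives the exact count. Otherwise Taylor's formula shows that
`Q - k` becomes `p^2` times a polynomial that is at most quadratic modulo `p`, so `m` drops by two
and a factor `p^(2n)` is gained. The induction therefore meets the modulus `p` only with quadratic
polynomials, where divisibility by `p^⌊(n-1)/2⌋` follows from an isotropic vector: along it the
equation is linear, and the lines that lie in the zero set are governed by a quadratic equation on a
space of smaller dimension.
-/

open MvPolynomial

section FiberCounting

variable {G H : Type*} [AddGroup G] [AddGroup H]

theorem card_subtype_comp_of_surjective {f : G →+ H} (hf : Function.Surjective f)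
    (P : H → Prop) : Nat.card {x // P (f x)} = Nat.card f.ker * Nat.card {y // P y} := by
  rw [mul_comm, ← Nat.card_prod]
  exact Nat.card_congr <| (Equiv.sigmaSubtypeFiberEquivSubtype f fun _ => Iff.rfl).symm.trans <|
    (Equiv.sigmaCongrRight fun y : {y // P y} => f.fiberEquivKerOfSurjective hf y.1).trans <|
    Equiv.sigmaEquivProd _ _

theorem sum_card_fiber_comp {X : Type*} [Finite X] [Fintype G] (f : G →+ H) (g : X → H) :
    ∑ i, Nat.card {x // g x = f i} = Nat.card f.ker * Nat.card {x // g x ∈ f.range} := by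
  have fiberEquiv (x : {x // g x ∈ f.range}) : {i // g x = f i} ≃ f.ker :=
    (Equiv.subtypeEquivRight fun i => by
      rw [Set.mem_preimage, Set.mem_singleton_iff, x.2.choose_spec, eq_comm]).trans
      (f.fiberEquivKer x.2.choose)
  rw [← Nat.card_sigma, mul_comm, ← Nat.card_prod]
  refine Nat.card_congr (Equiv.trans ?_ <| (Equiv.sigmaCongrRight fiberEquiv).trans <|
    Equiv.sigmaEquivProd _ _)
  exact
    { toFun := fun y => ⟨⟨y.2, y.1, y.2.2.symm⟩, y.1, y.2.2⟩
      invFun := fun y => ⟨y.2, y.1, y.2.2⟩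
      left_inv := fun _ => rfl
      right_inv := fun _ => rfl }

theorem dvd_card_subtype_of_forall_coset [Finite G] [Finite H] (f : H →+ G) (P : G → Prop)
    {d : ℕ} (hd : ∀ a, Nat.card f.ker * d ∣ Nat.card {y // P (a + f y)}) :
    d ∣ Nat.card {x // P x} := by
  have := Fintype.ofFinite (G ⧸ f.range)
  let toCoset (x : {x // P x}) : G ⧸ f.range := (x : G)
  rw [← Nat.card_congr (Equiv.sigmaFiberEquiv toCoset), Nat.card_sigma]
  refine Finset.dvd_sum fun c _ => ?_
  obtain ⟨a, rfl⟩ := QuotientAddGroup.mk_surjective c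
  have card_coset : Nat.card {x // toCoset x = a} = Nat.card {z : f.range // P (a + z)} :=
    Nat.card_congr
      { toFun := fun x => ⟨⟨-a + x.1, QuotientAddGroup.eq.mp x.2.symm⟩, by simpa using x.1.2⟩
        invFun := fun z => ⟨⟨a + z.1, z.2⟩, QuotientAddGroup.eq.mpr (by simp) |>.symm⟩
        left_inv := fun x => by simp
        right_inv := fun z => by simp }
  have card_pullback := card_subtype_comp_of_surjective f.rangeRestrict_surjective
    fun z : f.range => P (a + z)
  rw [f.ker_rangeRestrict] at card_pullback
  rw [card_coset]
  exact Nat.dvd_of_mul_dvd_mul_left Nat.card_pos (card_pullback ▸ hd a)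

theorem eq_ker_nsmul_card_of_isAddCyclic {A : Type*} [AddCommGroup A] [IsAddCyclic A] [Finite A]
    (S : AddSubgroup A) : S = (nsmulAddMonoidHom (Nat.card S) : A →+ A).ker := by
  refine AddSubgroup.eq_of_le_of_card_ge (fun x hx => ?_) ?_
  · exact congrArg ((↑) : S → A) (card_nsmul_eq_zero' (x := (⟨x, hx⟩ : S)))
  · rw [IsAddCyclic.card_nsmulAddMonoidHom_ker]
    exact Nat.gcd_le_right _ Nat.card_pos

end FiberCounting

/-- A polynomial function of degree at most two on a module, written without coordinates: a
quadratic form plus a linear form plus a constant. -/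
def IsQuadraticFunction {R V : Type*} [CommRing R] [AddCommGroup V] [Module R V]
    (f : V → R) : Prop :=
  ∃ (Q : QuadraticForm R V) (l : Module.Dual R V) (c : R), ∀ x, f x = Q x + l x + c

section QuadraticFunctions

variable {R V W σ : Type*} [CommRing R] [AddCommGroup V] [Module R V] [AddCommGroup W] [Module R W]

theorem IsQuadraticFunction.comp_affine {f : V → R} (hf : IsQuadraticFunction f) (v : V)
    (g : W →ₗ[R] V) : IsQuadraticFunction fun w => f (v + g w) := by
  obtain ⟨Q, l, c, hf⟩ := hf
  refine ⟨Q.comp g, (Q.polarBilin v + l) ∘ₗ g, f v, fun w => ?_⟩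
  change f (v + g w) = _
  rw [hf, hf v, QuadraticMap.map_add Q, map_add, QuadraticMap.comp_apply, LinearMap.comp_apply,
    LinearMap.add_apply, QuadraticMap.polarBilin_apply_apply]
  ring

theorem exists_dual_eq_eval {f : MvPolynomial σ R} (hf : f.IsHomogeneous 1) :
    ∃ l : Module.Dual R (σ → R), ∀ x, l x = eval x f := by
  rw [← mem_homogeneousSubmodule, homogeneousSubmodule_one_eq_span_X] at hf
  induction hf using Submodule.span_induction with
  | mem _ hX =>
    obtain ⟨i, rfl⟩ := hX
    exact ⟨LinearMap.proj i, by simp⟩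
  | zero => exact ⟨0, by simp⟩
  | add f g _ _ hf hg =>
    obtain ⟨l, hl⟩ := hf
    obtain ⟨m, hm⟩ := hg
    exact ⟨l + m, by simp [hl, hm]⟩
  | smul c f _ hf =>
    obtain ⟨l, hl⟩ := hf
    exact ⟨c • l, by simp [hl]⟩

theorem exists_quadraticForm_eq_eval {f : MvPolynomial σ R} (hf : f.IsHomogeneous 2) :
    ∃ Q : QuadraticForm R (σ → R), ∀ x, Q x = eval x f := by
  rw [← mem_homogeneousSubmodule, ← homogeneousSubmodule_one_pow, pow_two] at hf
  induction hf using Submodule.mul_induction_on' with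
  | mem_mul_mem f hf g hg =>
    obtain ⟨l, hl⟩ := exists_dual_eq_eval hf
    obtain ⟨m, hm⟩ := exists_dual_eq_eval hg
    exact ⟨QuadraticMap.linMulLin l m, by simp [hl, hm]⟩
  | add f _ g _ hf hg =>
    obtain ⟨P, hP⟩ := hf
    obtain ⟨Q, hQ⟩ := hg
    exact ⟨P + Q, by simp [hP, hQ]⟩

theorem isQuadraticFunction_eval {f : MvPolynomial σ R} (hf : f.totalDegree ≤ 2) :
    IsQuadraticFunction fun x => eval x f := by
  have sum_components : f = ∑ i ∈ Finset.range 3, homogeneousComponent i f := by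
    refine (sum_homogeneousComponent f).symm.trans (Finset.sum_subset ?_ fun i _ hi => ?_)
    · exact Finset.range_subset_range.mpr (by lia)
    · exact homogeneousComponent_eq_zero i f (by grind)
  obtain ⟨l, hl⟩ := exists_dual_eq_eval (homogeneousComponent_isHomogeneous 1 f)
  obtain ⟨Q, hQ⟩ := exists_quadraticForm_eq_eval (homogeneousComponent_isHomogeneous 2 f)
  refine ⟨Q, l, coeff 0 f, fun x => ?_⟩
  simp only
  conv_lhs => rw [sum_components]
  rw [map_sum, Finset.sum_range_succ, Finset.sum_range_succ, Finset.sum_range_one, hQ, hl,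
    homogeneousComponent_zero, eval_C]
  ring

end QuadraticFunctions

section FiniteField

variable {K V : Type*} [Field K] [AddCommGroup V] [Module K V]

theorem not_anisotropic_of_two_lt_finrank [Finite K]
    (hV : 2 < Module.finrank K V) (Q : QuadraticForm K V) : ¬ Q.Anisotropic := by
  classical
  have := Fintype.ofFinite K
  have := Module.finite_of_finrank_pos (pos_of_gt hV)
  obtain ⟨B, rfl⟩ := LinearMap.BilinMap.toQuadraticMap_surjective Q
  let b := Module.finBasis K V
  let f : MvPolynomial (Fin (Module.finrank K V)) K :=
    ∑ i, ∑ j, C (B (b i) (b j)) * (X i * X j)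
  have eval_f (x) : eval x f = B.toQuadraticMap (b.equivFun.symm x) := by
    simp only [f, map_sum, map_mul, eval_C, eval_X, map_smul, Module.Basis.equivFun_symm_apply,
      LinearMap.BilinMap.toQuadraticMap_apply,
      LinearMap.sum_apply, LinearMap.smul_apply, smul_eq_mul, Finset.mul_sum]
    rw [Finset.sum_comm]
    refine Finset.sum_congr rfl fun i _ => Finset.sum_congr rfl fun j _ => ?_
    ring
  have isHomogeneous_f : f.IsHomogeneous 2 :=
    .sum _ _ _ fun i _ => .sum _ _ _ fun j _ => ((isHomogeneous_X K i).mul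
      (isHomogeneous_X K j)).C_mul _
  have p_dvd := char_dvd_card_solutions (ringChar K) (f := f) <|
    isHomogeneous_f.totalDegree_le.trans_lt (by rwa [Fintype.card_fin])
  have zero_mem : eval 0 f = 0 := by rw [eval_f]; simp only [map_zero]
  have one_lt_card : 1 < Fintype.card {x // eval x f = 0} :=
    (CharP.prime_ringChar K).one_lt.trans_le
      (Nat.le_of_dvd (Fintype.card_pos_iff.mpr ⟨⟨0, zero_mem⟩⟩) p_dvd)
  obtain ⟨⟨x, hx⟩, x_ne⟩ := Fintype.exists_ne_of_one_lt_card one_lt_card ⟨0, zero_mem⟩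
  intro hB
  have := hB _ ((eval_f x).symm.trans hx)
  exact x_ne (Subtype.ext (b.equivFun.symm.map_eq_zero_iff.mp this))

theorem card_zeros_pencil {W : Type*} [Fintype K] [Finite W] (f g : W → K) :
    Nat.card {x : W × K // f x.1 + x.2 * g x.1 = 0} =
      Nat.card {w // g w ≠ 0} + Fintype.card K * Nat.card {w // g w = 0 ∧ f w = 0} := by
  classical
  have := Fintype.ofFinite W
  have card_line (w : W) : Nat.card {t // f w + t * g w = 0} =
      (if g w ≠ 0 then 1 else 0) + Fintype.card K * (if g w = 0 ∧ f w = 0 then 1 else 0) := by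
    by_cases hg : g w = 0
    · by_cases hf : f w = 0 <;> simp [hg, hf]
    · have unique_root (t : K) : f w + t * g w = 0 ↔ t = -f w / g w := by
        rw [eq_div_iff hg, eq_neg_iff_add_eq_zero, add_comm]
      simp [hg, unique_root]
  calc Nat.card {x : W × K // f x.1 + x.2 * g x.1 = 0}
      = ∑ w, Nat.card {t // f w + t * g w = 0} := by
        rw [← Nat.card_sigma]
        exact Nat.card_congr (Equiv.subtypeProdEquivSigmaSubtype fun w t => f w + t * g w = 0)
    _ = _ := by
        simp only [card_line, Finset.sum_add_distrib, ← Finset.mul_sum, Nat.card_eq_fintype_card,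
          Fintype.card_subtype, Finset.card_filter]

theorem exists_prod_equiv_of_ne_zero {v : V} (hv : v ≠ 0) :
    ∃ (W : Submodule K V) (e : (W × K) ≃ₗ[K] V), ∀ x, e x = x.1 + x.2 • v := by
  obtain ⟨W, hW⟩ := (K ∙ v).exists_isCompl
  exact ⟨W, (LinearEquiv.prodCongr (.refl K W) (.toSpanNonzeroSingleton K V v hv)).trans
    (Submodule.prodEquivOfIsCompl W _ hW.symm), fun x => by simp⟩

theorem finrank_le_finrank_ker_add_one [FiniteDimensional K V] (α : Module.Dual K V) :
    Module.finrank K V ≤ Module.finrank K α.ker + 1 := by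
  rw [← α.finrank_range_add_finrank_ker, add_comm]
  gcongr
  exact α.range.finrank_le.trans_eq (Module.finrank_self K)

theorem card_zeros_on_hyperplane {f : V → K} {α : Module.Dual K V} {β : K} {v : V}
    (hv : α v + β = 0) :
    Nat.card {x // α x + β = 0 ∧ f x = 0} = Nat.card {u : α.ker // f (v + u) = 0} := by
  have mem_iff (x : V) : α x + β = 0 ↔ x - v ∈ α.ker := by
    rw [LinearMap.mem_ker, map_sub, sub_eq_zero, eq_neg_of_add_eq_zero_left hv,
      eq_neg_iff_add_eq_zero]
  exact Nat.card_congr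
    { toFun := fun x => ⟨⟨x - v, (mem_iff x).mp x.2.1⟩, by simpa using x.2.2⟩
      invFun := fun u => ⟨v + u.1, (mem_iff _).mpr (by simp), u.2⟩
      left_inv := fun x => by simp
      right_inv := fun u => by simp }

theorem card_hyperplane [Fintype K] [FiniteDimensional K V] {α : Module.Dual K V} {β : K} {v : V}
    (hv : α v + β = 0) :
    Nat.card {x // α x + β = 0} = Fintype.card K ^ Module.finrank K α.ker := by
  have card_translate := card_zeros_on_hyperplane (f := fun _ => (0 : K)) hv
  simp only [and_true] at card_translate
  rw [card_translate, Nat.card_congr (Equiv.subtypeUnivEquiv fun _ => trivial),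
    Module.natCard_eq_pow_finrank (K := K) (V := α.ker), Nat.card_eq_fintype_card]

theorem pow_dvd_card_ne_zero_add_card_zeros_on_hyperplane [Fintype K] [FiniteDimensional K V]
    (hV : 2 ≤ Module.finrank K V) {f : V → K} (α : Module.Dual K V) (β : K)
    (hf : ∀ v, Fintype.card K ^ ((Module.finrank K α.ker - 1) / 2) ∣
      Nat.card {u : α.ker // f (v + u) = 0}) :
    Fintype.card K ^ (Module.finrank K V / 2) ∣
      Nat.card {x // α x + β ≠ 0} +
        Fintype.card K * Nat.card {x // α x + β = 0 ∧ f x = 0} := by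
  classical
  have := Module.finite_of_finite K (M := V)
  have card_split := Nat.card_congr (Equiv.sumCompl fun x => α x + β = 0)
  rw [Nat.card_sum, Module.natCard_eq_pow_finrank (K := K) (V := V),
    Nat.card_eq_fintype_card (α := K)] at card_split
  by_cases hzero : ∃ v, α v + β = 0
  · obtain ⟨v, hv⟩ := hzero
    have le_ker := finrank_le_finrank_ker_add_one α
    rw [card_zeros_on_hyperplane hv]
    refine dvd_add ?_ ?_
    · refine (Nat.dvd_add_right (b := Nat.card {x // α x + β = 0}) ?_).mp ?_
      · exact card_hyperplane hv ▸ pow_dvd_pow _ (by lia)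
      · exact card_split ▸ pow_dvd_pow _ (by lia)
    · refine .trans ?_ (mul_dvd_mul_left (Fintype.card K) (hf v))
      rw [← pow_succ']
      exact pow_dvd_pow _ (by lia)
  · have isEmpty_zeros : IsEmpty {x // α x + β = 0} := ⟨fun x => hzero ⟨x, x.2⟩⟩
    have isEmpty_inter : IsEmpty {x // α x + β = 0 ∧ f x = 0} := ⟨fun x => hzero ⟨x, x.2.1⟩⟩
    rw [Nat.card_of_isEmpty, zero_add] at card_split
    rw [Nat.card_of_isEmpty (α := {x // α x + β = 0 ∧ f x = 0}), mul_zero, add_zero, card_split]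
    exact pow_dvd_pow _ (by lia)

theorem IsQuadraticFunction.pow_dvd_card_zeros [Fintype K] [FiniteDimensional K V] {f : V → K}
    (hf : IsQuadraticFunction f) :
    Fintype.card K ^ ((Module.finrank K V - 1) / 2) ∣ Nat.card {x // f x = 0} := by
  induction hd : Module.finrank K V using Nat.strong_induction_on generalizing V with
  | _ d ih =>
  subst hd
  obtain hV | hV := le_or_gt (Module.finrank K V) 2
  · simp [show (Module.finrank K V - 1) / 2 = 0 by lia]
  obtain ⟨Q, l, c, hQ⟩ := id hf
  obtain ⟨v, hQv, hv⟩ : ∃ v, Q v = 0 ∧ v ≠ 0 := by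
    simpa [QuadraticMap.Anisotropic] using not_anisotropic_of_two_lt_finrank hV Q
  obtain ⟨W, e, he⟩ := exists_prod_equiv_of_ne_zero (K := K) hv
  have finrank_W : Module.finrank K W + 1 = Module.finrank K V := by
    simpa using e.finrank_eq
  have pencil (x : W × K) :
      f (e x) = f x.1 + x.2 * ((Q.polarBilin v ∘ₗ W.subtype) x.1 + l v) := by
    rw [he, hQ, hQ, QuadraticMap.map_add Q, QuadraticMap.map_smul, QuadraticMap.polar_smul_right,
      QuadraticMap.polar_comm, hQv, map_add, map_smul, LinearMap.comp_apply,
      QuadraticMap.polarBilin_apply_apply, W.subtype_apply, smul_eq_mul, smul_eq_mul]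
    ring
  have : Finite W := Module.finite_of_finite K
  rw [← Nat.card_congr (e.toEquiv.subtypeEquiv fun x => (pencil x).symm.congr_left),
    card_zeros_pencil (fun w : W => f w) fun w => (Q.polarBilin v ∘ₗ W.subtype) w + l v,
    ← finrank_W, Nat.add_sub_cancel]
  refine pow_dvd_card_ne_zero_add_card_zeros_on_hyperplane (by lia) _ _ fun w =>
    ih _ ?_ (hf.comp_affine (w : V) (W.subtype ∘ₗ Submodule.subtype _)) rfl
  exact (Submodule.finrank_le _).trans_lt (by lia)

theorem pow_dvd_card_zeros_of_totalDegree_le_two [Fintype K] {σ : Type*} [Fintype σ]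
    {f : MvPolynomial σ K} (hf : f.totalDegree ≤ 2) :
    Fintype.card K ^ ((Fintype.card σ - 1) / 2) ∣ Nat.card {x // eval x f = 0} := by
  simpa using (isQuadraticFunction_eval hf).pow_dvd_card_zeros

end FiniteField

section Rescaling

variable {σ R : Type*} [CommRing R]

/-- The polynomial `F (a + π X)`, whose zeros parametrize the zeros of `F` congruent to `a`
modulo `π`. -/
noncomputable def rescaleAt (π : R) (a : σ → R) : MvPolynomial σ R →ₐ[R] MvPolynomial σ R :=
  bind₁ fun i => C (a i) + C π * X i

theorem aeval_rescaleAt {A : Type*} [CommRing A] [Algebra R A] (π : R) (a : σ → R)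
    (F : MvPolynomial σ R) (x : σ → A) :
    aeval x (rescaleAt π a F) =
      aeval (fun i => algebraMap R A (a i) + algebraMap R A π * x i) F := by
  rw [rescaleAt, aeval_bind₁]
  simp only [map_add, map_mul, aeval_C, aeval_X]

theorem exists_rescaleAt_eq_taylor [Fintype σ] (π : R) (a : σ → R) (F : MvPolynomial σ R) :
    ∃ A B : MvPolynomial σ R, A.IsHomogeneous 2 ∧ rescaleAt π a F =
      C (eval a F) + C π * ∑ i, C (eval a (pderiv i F)) * X i + C (π ^ 2) * A + C (π ^ 3) * B := by
  classical
  induction F using MvPolynomial.induction_on with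
  | C c => exact ⟨0, 0, isHomogeneous_zero _ _ _, by simp [rescaleAt]⟩
  | add F G hF hG =>
    obtain ⟨A, B, hA, hF⟩ := hF
    obtain ⟨A', B', hA', hG⟩ := hG
    refine ⟨A + A', B + B', hA.add hA', ?_⟩
    simp only [map_add, hF, hG, add_mul, Finset.sum_add_distrib]
    ring
  | mul_X F k hF =>
    obtain ⟨A, B, hA, hF⟩ := hF
    let L := ∑ i, C (eval a (pderiv i F)) * X i
    have isHomogeneous_L : L.IsHomogeneous 1 :=
      .sum _ _ _ fun i _ => (isHomogeneous_X R i).C_mul _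
    have differential_mul_X : ∑ i, C (eval a (pderiv i (F * X k))) * X i =
        C (a k) * L + C (eval a F) * X k := by
      simp only [L, pderiv_mul, pderiv_X, map_add, map_mul, eval_X, add_mul,
        Finset.sum_add_distrib, Finset.mul_sum]
      congr 1
      · exact Finset.sum_congr rfl fun i _ => by ring
      · rw [Finset.sum_eq_single k (fun i _ hik => by simp [hik.symm]) (by simp)]
        simp
    refine ⟨C (a k) * A + L * X k, C (a k) * B + A * X k + C π * (B * X k),
      (hA.C_mul _).add (isHomogeneous_L.mul (isHomogeneous_X R k)), ?_⟩
    have rescaleAt_X : rescaleAt π a (X k) = C (a k) + C π * X k := by simp [rescaleAt]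
    rw [differential_mul_X, map_mul, rescaleAt_X, hF, map_mul, eval_X]
    simp only [map_mul, map_pow]
    ring

theorem exists_rescaleAt_eq_of_dvd_pderiv [Finite σ] {π : R} {a : σ → R} {F : MvPolynomial σ R}
    (hF : ∀ i, π ∣ eval a (pderiv i F)) :
    ∃ A B : MvPolynomial σ R, A.totalDegree ≤ 2 ∧
      rescaleAt π a F = C (eval a F) + C (π ^ 2) * (A + C π * B) := by
  have := Fintype.ofFinite σ
  obtain ⟨A, B, hA, taylor⟩ := exists_rescaleAt_eq_taylor π a F
  choose b hb using hF
  have isHomogeneous_linear : (∑ i, C (b i) * X i : MvPolynomial σ R).IsHomogeneous 1 :=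
    .sum _ _ _ fun i _ => (isHomogeneous_X R i).C_mul _
  refine ⟨∑ i, C (b i) * X i + A, B, ?_, ?_⟩
  · exact (totalDegree_add _ _).trans
      (max_le (isHomogeneous_linear.totalDegree_le.trans one_le_two) hA.totalDegree_le)
  · simp only [taylor, hb, map_mul, map_pow, mul_assoc, ← Finset.mul_sum]
    ring

end Rescaling

section RootsOnLines

variable {σ : Type*}

theorem dvd_aeval_sub_aeval {R A : Type*} [CommRing R] [CommRing A] [Algebra R A] {d : A}
    {x y : σ → A} (hxy : ∀ i, d ∣ x i - y i) (F : MvPolynomial σ R) :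
    d ∣ aeval x F - aeval y F := by
  let π := Ideal.Quotient.mkₐ R (Ideal.span {d})
  have mod_iff (u v : A) : d ∣ u - v ↔ π u = π v := by
    rw [← Ideal.mem_span_singleton, ← Ideal.Quotient.eq, Ideal.Quotient.mkₐ_eq_mk]
  rw [mod_iff, comp_aeval_apply, comp_aeval_apply]
  simp only [(mod_iff _ _).mp (hxy _)]

theorem card_zeros_of_injective_update {R : Type*} [Zero R] [Finite R] [Fintype σ]
    [DecidableEq σ] {f : (σ → R) → R} {i : σ}
    (hf : ∀ y, Function.Injective fun t => f (Function.update y i t)) :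
    Nat.card {y // f y = 0} = Nat.card R ^ (Fintype.card σ - 1) := by
  have card_others : Nat.card ({j // j ≠ i} → R) = Nat.card R ^ (Fintype.card σ - 1) := by
    simp [Nat.card_fun]
  rw [← card_others]
  refine Nat.card_congr (Equiv.ofBijective (fun y j => y.1 j) ⟨fun y y' h => ?_, fun z => ?_⟩)
  · have y'_eq_update : y'.1 = Function.update y.1 i (y'.1 i) := by
      rw [Function.eq_update_iff]
      exact ⟨rfl, fun j hj => (congrFun h ⟨j, hj⟩).symm⟩
    have same_value : f (Function.update y.1 i (y.1 i)) = f (Function.update y.1 i (y'.1 i)) := by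
      rw [Function.update_eq_self, ← y'_eq_update, y.2, y'.2]
    exact Subtype.ext (by rw [y'_eq_update, ← hf _ same_value, Function.update_eq_self])
  · let y (j) := if hj : j = i then 0 else z ⟨j, hj⟩
    obtain ⟨t, ht⟩ := Finite.surjective_of_injective (hf y) 0
    exact ⟨⟨_, ht⟩, funext fun j => by simp [y, j.2]⟩

end RootsOnLines

section ZeroCount

variable {σ : Type*}

/-- The number of zeros modulo `M` of a polynomial with integer coefficients. -/
noncomputable def zeroCount (M : ℕ) (F : MvPolynomial σ ℤ) : ℕ :=
  Nat.card {x : σ → ZMod M // aeval x F = 0}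

theorem zeroCount_map_castRingHom (M : ℕ) (F : MvPolynomial σ ℤ) :
    Nat.card {x // eval x (map (Int.castRingHom (ZMod M)) F) = 0} = zeroCount M F := by
  simp only [eval_map, zeroCount, aeval_def, algebraMap_int_eq]

theorem natCast_mul_eq_zero_iff_castHom {K M : ℕ} (hK : K ≠ 0) (z : ZMod (K * M)) :
    (K : ZMod (K * M)) * z = 0 ↔ ZMod.castHom (dvd_mul_left M K) (ZMod M) z = 0 := by
  obtain ⟨z, rfl⟩ := ZMod.intCast_surjective z
  rw [map_intCast, ZMod.intCast_zmod_eq_zero_iff_dvd, ← Int.cast_natCast, ← Int.cast_mul,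
    ZMod.intCast_zmod_eq_zero_iff_dvd, Nat.cast_mul]
  exact mul_dvd_mul_iff_left (by exact_mod_cast hK)

theorem zeroCount_C_mul [Fintype σ] {K M : ℕ} [NeZero (K * M)] (F : MvPolynomial σ ℤ) :
    zeroCount (K * M) (C (K : ℤ) * F) = K ^ Fintype.card σ * zeroCount M F := by
  have hK : K ≠ 0 := left_ne_zero_of_mul (NeZero.ne (K * M))
  have : NeZero M := ⟨right_ne_zero_of_mul (NeZero.ne (K * M))⟩
  let π := ZMod.castHom (dvd_mul_left M K) (ZMod M)
  let reduce : (σ → ZMod (K * M)) →+ (σ → ZMod M) := π.toAddMonoidHom.compLeft σ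
  have reduce_surjective : Function.Surjective reduce :=
    (ZMod.castHom_surjective (dvd_mul_left M K)).comp_left
  have card_ker : Nat.card reduce.ker = K ^ Fintype.card σ := by
    have := card_subtype_comp_of_surjective reduce_surjective fun _ => True
    simp only [Nat.card_congr (Equiv.subtypeUnivEquiv fun _ => trivial), Nat.card_pi, Nat.card_zmod,
      Finset.prod_const, Finset.card_univ, mul_pow] at this
    exact (Nat.eq_of_mul_eq_mul_right (pow_pos (NeZero.pos M) _) this).symm
  have reduce_zero_iff (x : σ → ZMod (K * M)) :
      aeval x (C (K : ℤ) * F) = 0 ↔ aeval (reduce x) F = 0 := by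
    rw [map_mul, aeval_C, map_natCast, natCast_mul_eq_zero_iff_castHom hK]
    exact Eq.congr_left (comp_aeval_apply x π.toIntAlgHom F)
  rw [zeroCount, Nat.card_congr (Equiv.subtypeEquivRight reduce_zero_iff),
    card_subtype_comp_of_surjective reduce_surjective fun y => aeval y F = 0, card_ker, zeroCount]

theorem zeroCount_eq_zero_of_not_dvd {M : ℕ} {c d : ℤ} (hdM : d ∣ M) (hdc : ¬ d ∣ c)
    (F : MvPolynomial σ ℤ) : zeroCount M (C c + C d * F) = 0 := by
  refine Nat.card_eq_zero.mpr (.inl ⟨fun ⟨x, hx⟩ => hdc ?_⟩)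
  obtain ⟨z, hz⟩ := ZMod.intCast_surjective (aeval x F)
  rw [map_add, map_mul, aeval_C, aeval_C, ← hz, eq_intCast, eq_intCast, ← Int.cast_mul,
    ← Int.cast_add, ZMod.intCast_zmod_eq_zero_iff_dvd] at hx
  exact (dvd_add_left (dvd_mul_right d z)).mp (hdM.trans hx)

theorem card_ker_nsmul_pi_zmod [Fintype σ] {K N : ℕ} [NeZero N] (hK : K ∣ N) :
    Nat.card (nsmulAddMonoidHom K : (σ → ZMod N) →+ (σ → ZMod N)).ker = K ^ Fintype.card σ := by
  let kerEquiv : (nsmulAddMonoidHom K : (σ → ZMod N) →+ (σ → ZMod N)).ker ≃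
      (σ → (nsmulAddMonoidHom K : ZMod N →+ ZMod N).ker) :=
    (Equiv.subtypeEquivRight fun x => by simp [AddMonoidHom.mem_ker, funext_iff]).trans
      Equiv.subtypePiEquivPi
  rw [Nat.card_congr kerEquiv, Nat.card_pi, IsAddCyclic.card_nsmulAddMonoidHom_ker, Nat.card_zmod,
    Nat.gcd_eq_right hK, Finset.prod_const, Finset.card_univ]

theorem dvd_zeroCount_of_forall_rescaleAt [Fintype σ] {K N d : ℕ} [NeZero N] (hK : K ∣ N)
    {F : MvPolynomial σ ℤ}
    (hF : ∀ a, K ^ Fintype.card σ * d ∣ zeroCount N (rescaleAt (K : ℤ) a F)) :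
    d ∣ zeroCount N F := by
  refine dvd_card_subtype_of_forall_coset (nsmulAddMonoidHom K : (σ → ZMod N) →+ (σ → ZMod N))
    _ fun a => ?_
  obtain ⟨a, rfl⟩ := ZMod.intCast_surjective.comp_left a
  rw [card_ker_nsmul_pi_zmod hK]
  convert hF a using 1
  simp [zeroCount, aeval_rescaleAt, Function.comp_def, Pi.add_def]

theorem isUnit_intCast_add_natCast_mul {p : ℕ} (hp : p.Prime) {m : ℕ} {b : ℤ} (hb : ¬ (p : ℤ) ∣ b)
    (z : ZMod (p ^ m)) : IsUnit ((b : ZMod (p ^ m)) + p * z) := by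
  have isNilpotent_p : IsNilpotent (p : ZMod (p ^ m)) :=
    ⟨m, by rw [← Nat.cast_pow, ZMod.natCast_self]⟩
  have isUnit_b : IsUnit (b : ZMod (p ^ m)) := by
    rw [ZMod.coe_int_isUnit_iff_isCoprime, Nat.cast_pow]
    exact ((Nat.prime_iff_prime_int.mp hp).coprime_iff_not_dvd.mpr hb).pow_left
  exact ((Commute.all _ z).isNilpotent_mul_right isNilpotent_p).isUnit_add_left_of_commute
    isUnit_b (.all _ _)

theorem zeroCount_prime_pow_of_not_dvd_linear [Fintype σ] {p : ℕ} (hp : p.Prime) (m : ℕ)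
    {b : σ → ℤ} {i : σ} (hi : ¬ (p : ℤ) ∣ b i) (c : ℤ) (F : MvPolynomial σ ℤ) :
    zeroCount (p ^ m) (C c + (∑ j, C (b j) * X j + C (p : ℤ) * F)) =
      (p ^ m) ^ (Fintype.card σ - 1) := by
  classical
  have : NeZero (p ^ m) := ⟨pow_ne_zero m hp.ne_zero⟩
  rw [zeroCount, card_zeros_of_injective_update (i := i) ?_, Nat.card_zmod]
  intro y t t' h
  let x := Function.update y i t
  let x' := Function.update y i t'
  have dvd_sub (j) : t - t' ∣ x j - x' j := by
    obtain rfl | hj := eq_or_ne j i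
    · simp [x, x']
    · simp [x, x', hj]
  obtain ⟨z, hz⟩ := dvd_aeval_sub_aeval dvd_sub F
  have linear_sub :
      ∑ j, (b j : ZMod (p ^ m)) * x j - ∑ j, (b j : ZMod (p ^ m)) * x' j = b i * (t - t') := by
    rw [← Finset.sum_sub_distrib, Finset.sum_eq_single i]
    · simp [x, x', mul_sub]
    · exact fun j _ hj => by simp [x, x', hj]
    · simp
  refine sub_eq_zero.mp ((isUnit_intCast_add_natCast_mul hp hi z).mul_right_eq_zero.mp ?_)
  change aeval x _ = aeval x' _ at h
  simp only [map_add, map_sum, map_mul, eq_intCast, map_intCast, map_natCast, aeval_X] at h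
  linear_combination h - linear_sub - p * hz

end ZeroCount

section Progressions

theorem sum_fin_natCast {N : ℕ} [NeZero N] {A : Type*} [AddCommMonoid A] (g : ZMod N → A) :
    ∑ i : Fin N, g (i : ℕ) = ∑ z, g z :=
  let e : Fin N ≃ ZMod N :=
    { toFun := fun i => ((i : ℕ) : ZMod N)
      invFun := fun z => ⟨z.val, z.val_lt⟩
      left_inv := fun i => Fin.ext (ZMod.val_cast_of_lt i.2)
      right_inv := ZMod.natCast_zmod_val }
  e.sum_comp g

theorem exists_addMonoidHom_zmod_natCast {R : Type*} [CommRing R] {N : ℕ} {v : R}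
    (hv : N * v = 0) : ∃ φ : ZMod N →+ R, ∀ i : ℕ, φ i = v * i :=
  ⟨ZMod.lift N ⟨zmultiplesHom R v, by simpa using hv⟩, fun i => by
    simpa [mul_comm] using ZMod.lift_coe N ⟨zmultiplesHom R v, by simpa using hv⟩ i⟩

theorem sum_card_eval_eq_add {σ : Type*} [Finite σ] {M N : ℕ} [NeZero M] [NeZero N]
    (φ : ZMod N →+ ZMod M) {Q : MvPolynomial σ (ZMod M)} {k : ZMod M} {F : MvPolynomial σ ℤ}
    (hF : map (Int.castRingHom (ZMod M)) F = Q - C k) :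
    ∑ i, Nat.card {x // eval x Q = k + φ i} =
      Nat.card φ.ker * zeroCount M (C (Nat.card φ.range : ℤ) * F) := by
  have mem_range_iff (x : σ → ZMod M) :
      eval x Q - k ∈ φ.range ↔ aeval x (C (Nat.card φ.range : ℤ) * F) = 0 := by
    have eval_F : aeval x F = eval x Q - k := by
      rw [aeval_def, algebraMap_int_eq, ← eval_map, hF, map_sub, eval_C]
    conv_lhs => rw [eq_ker_nsmul_card_of_isAddCyclic φ.range]
    simp [AddMonoidHom.mem_ker, eval_F]
  have fibers := sum_card_fiber_comp φ fun x => eval x Q - k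
  simp only [sub_eq_iff_eq_add'] at fibers
  rw [fibers, zeroCount, Nat.card_congr (Equiv.subtypeEquivRight mem_range_iff)]

end Progressions

section PrimePowers

variable {σ : Type*} [Fintype σ] {p : ℕ}

theorem pow_dvd_zeroCount_rescaleAt_of_not_dvd_pderiv (hp : p.Prime) (m : ℕ) {a : σ → ℤ} {i : σ}
    {F : MvPolynomial σ ℤ} (hi : ¬ (p : ℤ) ∣ eval a (pderiv i F)) :
    p ^ Fintype.card σ * (p ^ m) ^ (Fintype.card σ - 1) ∣
      zeroCount (p ^ (m + 1)) (rescaleAt (p : ℤ) a F) := by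
  have : NeZero (p * p ^ m) := ⟨mul_ne_zero hp.ne_zero (pow_ne_zero m hp.ne_zero)⟩
  obtain ⟨A, B, -, taylor⟩ := exists_rescaleAt_eq_taylor (p : ℤ) a F
  let L : MvPolynomial σ ℤ := ∑ j, C (eval a (pderiv j F)) * X j
  rw [pow_succ']
  by_cases hc : (p : ℤ) ∣ eval a F
  · obtain ⟨c, hc⟩ := hc
    have factor : rescaleAt (p : ℤ) a F =
        C (p : ℤ) * (C c + (L + C (p : ℤ) * (A + C (p : ℤ) * B))) := by
      rw [taylor, hc]
      simp only [map_mul, map_pow]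
      ring
    rw [factor, zeroCount_C_mul]
    exact mul_dvd_mul_left _ (zeroCount_prime_pow_of_not_dvd_linear
      (b := fun j => eval a (pderiv j F)) hp m hi c _).symm.dvd
  · have factor : rescaleAt (p : ℤ) a F =
        C (eval a F) + C (p : ℤ) * (L + C (p : ℤ) * (A + C (p : ℤ) * B)) := by
      rw [taylor]
      simp only [map_pow]
      ring
    rw [factor, zeroCount_eq_zero_of_not_dvd (by simp) hc]
    exact dvd_zero _

theorem pow_dvd_zeroCount_rescaleAt_of_dvd_pderiv (hp : p.Prime) {r d : ℕ} {a : σ → ℤ}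
    {F : MvPolynomial σ ℤ} (hF : ∀ i, (p : ℤ) ∣ eval a (pderiv i F))
    (hd : ∀ H : MvPolynomial σ ℤ, (map (Int.castRingHom (ZMod p)) H).totalDegree ≤ 2 →
      d ∣ zeroCount (p ^ r) H) :
    (p ^ 2) ^ Fintype.card σ * d ∣ zeroCount (p ^ (r + 2)) (rescaleAt (p : ℤ) a F) := by
  have : NeZero (p ^ 2 * p ^ r) :=
    ⟨mul_ne_zero (pow_ne_zero 2 hp.ne_zero) (pow_ne_zero r hp.ne_zero)⟩
  obtain ⟨A, B, hA, taylor⟩ := exists_rescaleAt_eq_of_dvd_pderiv hF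
  rw [taylor, add_comm r, pow_add]
  by_cases hc : (p : ℤ) ^ 2 ∣ eval a F
  · obtain ⟨c, hc⟩ := hc
    have factor : C (eval a F) + C ((p : ℤ) ^ 2) * (A + C (p : ℤ) * B) =
        C ((p ^ 2 : ℕ) : ℤ) * (C c + A + C (p : ℤ) * B) := by
      rw [hc, Nat.cast_pow, map_mul]
      ring
    have map_eq : map (Int.castRingHom (ZMod p)) (C c + A + C (p : ℤ) * B) =
        map (Int.castRingHom (ZMod p)) (C c + A) := by
      simp
    rw [factor, zeroCount_C_mul]
    refine mul_dvd_mul_left _ (hd _ ?_)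
    rw [map_eq]
    exact (Finset.sup_mono (support_map_subset _ _)).trans <|
      (totalDegree_add _ _).trans (max_le ((totalDegree_C c).trans_le zero_le_two) hA)
  · rw [zeroCount_eq_zero_of_not_dvd (by simp) hc]
    exact dvd_zero _

theorem pow_dvd_zeroCount (hp : p.Prime) (hσ : 2 ≤ Fintype.card σ) (r : ℕ)
    (F : MvPolynomial σ ℤ)
    (hF : r = 1 → (map (Int.castRingHom (ZMod p)) F).totalDegree ≤ 2) :
    p ^ ((r * Fintype.card σ + 1) / 2 - 1) ∣ zeroCount (p ^ r) F := by
  induction r using Nat.strong_induction_on generalizing F with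
  | _ r ih =>
  match r, ih, hF with
  | 0, _, _ => simp
  | 1, _, hF =>
    have : Fact p.Prime := ⟨hp⟩
    have := pow_dvd_card_zeros_of_totalDegree_le_two (hF rfl)
    rw [ZMod.card, zeroCount_map_castRingHom] at this
    rw [pow_one]
    exact (pow_dvd_pow p (by lia)).trans this
  | r + 2, ih, _ =>
    have : NeZero (p ^ (r + 2)) := ⟨pow_ne_zero _ hp.ne_zero⟩
    refine dvd_zeroCount_of_forall_rescaleAt (dvd_pow_self p (by lia)) fun a => ?_
    by_cases ha : ∀ i, (p : ℤ) ∣ eval a (pderiv i F)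
    · refine .trans ?_ (pow_dvd_zeroCount_rescaleAt_of_dvd_pderiv hp ha fun H hH =>
        ih r (by lia) H fun _ => hH)
      rw [← pow_mul, ← pow_add, ← pow_add]
      refine pow_dvd_pow p ?_
      rw [add_mul]
      lia
    · obtain ⟨i, hi⟩ := not_forall.mp ha
      refine .trans (mul_dvd_mul_left _ ?_)
        (pow_dvd_zeroCount_rescaleAt_of_not_dvd_pderiv hp (r + 1) hi)
      rw [← pow_mul]
      refine pow_dvd_pow p ?_
      obtain ⟨n, hn⟩ := Nat.exists_eq_add_of_le' hσ
      rw [hn, show n + 2 - 1 = n + 1 by lia]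
      ring_nf
      lia

theorem pow_dvd_zeroCount_C_pow_mul (hp : p.Prime) (hσ : 2 ≤ Fintype.card σ) {r t : ℕ}
    (hr : 2 ≤ r) (ht : t ≤ r) (F : MvPolynomial σ ℤ) :
    p ^ ((r * Fintype.card σ + 1) / 2 + t - 1) ∣
      zeroCount (p ^ r) (C ((p ^ t : ℕ) : ℤ) * F) := by
  obtain ⟨m, rfl⟩ := Nat.exists_eq_add_of_le ht
  obtain ⟨n, hn⟩ := Nat.exists_eq_add_of_le' hσ
  have : NeZero (p ^ t * p ^ m) :=
    ⟨mul_ne_zero (pow_ne_zero t hp.ne_zero) (pow_ne_zero m hp.ne_zero)⟩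
  rw [pow_add p t m, zeroCount_C_mul, ← pow_mul]
  obtain rfl | hm := eq_or_ne m 1
  · refine .mul_right (pow_dvd_pow p ?_) _
    rw [hn]
    obtain ⟨t, rfl⟩ := Nat.exists_eq_add_of_le' (show 1 ≤ t by lia)
    ring_nf
    lia
  · refine .trans ?_ (mul_dvd_mul_left _ (pow_dvd_zeroCount hp hσ m F fun h => absurd h hm))
    rw [← pow_add, hn]
    refine pow_dvd_pow p ?_
    have : t * 2 ≤ t * (n + 2) := by gcongr; lia
    rw [add_mul]
    obtain rfl | hm_pos := Nat.eq_zero_or_pos m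
    · lia
    · have : 1 * 2 ≤ m * (n + 2) := by gcongr <;> lia
      lia

theorem pow_dvd_sum_card_eval_eq_add (hp : p.Prime) (hσ : 2 ≤ Fintype.card σ) {r q : ℕ}
    (hr : 2 ≤ r) [NeZero (p ^ q)] (φ : ZMod (p ^ q) →+ ZMod (p ^ r))
    (Q : MvPolynomial σ (ZMod (p ^ r))) (k : ZMod (p ^ r)) :
    p ^ ((r * Fintype.card σ + 1) / 2 + q - 1) ∣ ∑ i, Nat.card {x // eval x Q = k + φ i} := by
  have : NeZero (p ^ r) := ⟨pow_ne_zero r hp.ne_zero⟩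
  obtain ⟨F, hF⟩ := map_surjective (Int.castRingHom _) ZMod.intCast_surjective (Q - C k)
  have card_ker_mul_card_range : Nat.card φ.ker * Nat.card φ.range = p ^ q := by
    rw [← AddSubgroup.index_ker, φ.ker.card_mul_index, Nat.card_zmod]
  have card_range_dvd : Nat.card φ.range ∣ p ^ r :=
    φ.range.card_addSubgroup_dvd_card.trans (Nat.card_zmod (p ^ r)).dvd
  obtain ⟨s, -, card_ker⟩ := (Nat.dvd_prime_pow hp).mp (Dvd.intro _ card_ker_mul_card_range)
  obtain ⟨t, ht, card_range⟩ := (Nat.dvd_prime_pow hp).mp card_range_dvd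
  rw [card_ker, card_range, ← pow_add] at card_ker_mul_card_range
  have hst : s + t = q := Nat.pow_right_injective hp.two_le card_ker_mul_card_range
  rw [sum_card_eval_eq_add φ hF, card_ker, card_range]
  refine .trans ?_ (mul_dvd_mul_left _ (pow_dvd_zeroCount_C_pow_mul hp hσ hr ht F))
  rw [← pow_add]
  exact pow_dvd_pow p (by lia)

end PrimePowers

/-- For a prime `p`, `r ≥ 2`, a polynomial `Q` in `n ≥ 2` variables over `ℤ/p^r`,
any `k, w` and `q ≤ r`, the sum `∑_{i<p^q} #(k + w p^{r-q} i)_Q` is divisible by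
`p^{⌈rn/2⌉+q-1}`. -/
theorem stmt_1 (p r : ℕ) (hp : p.Prime) (hr : 2 ≤ r) (n : ℕ) (hn : 2 ≤ n)
    (Q : MvPolynomial (Fin n) (ZMod (p ^ r)))
    (k w : ZMod (p ^ r)) (q : ℕ) (hq : q ≤ r) :
    (p ^ ((r * n + 1) / 2 + q - 1) : ℕ) ∣
    ∑ i : Fin (p ^ q),
      Nat.card {x : Fin n → ZMod (p ^ r) //
        MvPolynomial.eval x Q =
          k + w * (p : ZMod (p ^ r)) ^ (r - q) * ((i : ℕ) : ZMod (p ^ r))} := by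
  have : NeZero (p ^ q) := ⟨pow_ne_zero q hp.ne_zero⟩
  have step_torsion : ((p ^ q : ℕ) : ZMod (p ^ r)) * (w * p ^ (r - q)) = 0 := by
    rw [Nat.cast_pow, mul_left_comm, ← pow_add, Nat.add_sub_cancel' hq, ← Nat.cast_pow,
      ZMod.natCast_self, mul_zero]
  obtain ⟨φ, hφ⟩ := exists_addMonoidHom_zmod_natCast step_torsion
  have dvd_sum := pow_dvd_sum_card_eval_eq_add hp (by simpa using hn) hr φ Q k
  simpa only [Fintype.card_fin, ← sum_fin_natCast, hφ] using dvd_sum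
end

section
/- Let r ≥ 1 and let Q be a polynomial of total degree at most 2 in n ≥ 3 variables (x_1, …, x_{n-1}, z) over Z_{2^r}. Then for all natural numbers q ≤ r and v ≤ r, all elements k, w, g, u ∈ Z_{2^r}, and every polynomial T of total degree at most 1 in the variables x_1, …, x_{n-1}, the sum Σ_{i=0}^{2^q - 1} Σ_{j=0}^{2^v - 1} #(k + w 2^{r-q} i + g 2^{r-v} j)_{Q, z = T(x) + u 2^{r-v} j} is divisible by 2^{⌈(r(n-1) + min(2v, r))/2⌉ + q - 1}. -/
/-!
Let `χ : ℤ/2^r → ℤ` satisfy `χ (t + 2^b) = -χ t`, let `f` be quadratic, and let `H ⊇ K` be the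
boxes of points divisible by `2^⌊(b+1)/2⌋` and by `2^⌈(b+1)/2⌉`, intersected with a box `D`. On a
coset of `H`, the bilinear part of `f` takes values divisible by `2^b`, and by `2^(b+1)` against
`K`. Hence either some translation along `K` changes the sign of `χ ∘ f`, and its sum over the coset
vanishes, or `χ ∘ f` is a constant multiple of a quadratic character, and the square of its sum is
divisible by `|H| |K|`.

Taking for `χ` the combination `2·[2^(b+1) ∣ t] - [2^b ∣ t]` compares the numbers of `p ∈ D` with
`2^(b+1) ∣ f p` and with `2^b ∣ f p`, which gives the divisibility of all these numbers by
induction on `b`. The sum over `i` counts the points with `2^a ∣ f p`, for some `a`, with constant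
multiplicity, and the sum over `j` is the restriction of the last coordinate to multiples of
`2^(r-v)`.
-/

open Finset MvPolynomial

theorem pow_half_dvd_of_pow_dvd_sq {M : Type*} [CommMonoidWithZero M] [IsCancelMulZero M]
    {p a : M} (hp : Prime p) {n : ℕ} (h : p ^ n ∣ a ^ 2) : p ^ ((n + 1) / 2) ∣ a := by
  rw [pow_dvd_iff_le_emultiplicity, emultiplicity_pow hp] at h
  rw [pow_dvd_iff_le_emultiplicity]
  generalize emultiplicity p a = e at h ⊢
  induction e with
  | top => exact le_top
  | coe e =>
    norm_cast at h ⊢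
    omega

section FiniteGroups

variable {A : Type*} [AddCommGroup A]

theorem dvd_sum_of_dvd_sum_coset [Fintype A] (H : AddSubgroup A) [Fintype H] {R : Type*}
    [CommSemiring R] {f : A → R} {d : R} (h : ∀ a, d ∣ ∑ y : H, f (a + y)) : d ∣ ∑ a, f a := by
  classical
  obtain ⟨S, hS, -⟩ := H.exists_isComplement_left 0
  rw [← hS.sum_comp, Fintype.sum_prod_type]
  exact dvd_sum fun s _ ↦ h s

theorem dvd_sum_subgroup_of_dvd_sum_coset {H G : AddSubgroup A} (hHG : H ≤ G) [Fintype H]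
    [Fintype G] {R : Type*} [CommSemiring R] {f : A → R} {d : R}
    (h : ∀ a ∈ G, d ∣ ∑ y : H, f (a + y)) : d ∣ ∑ a : G, f a := by
  have : Fintype (H.addSubgroupOf G) := Fintype.ofFinite _
  refine dvd_sum_of_dvd_sum_coset (H.addSubgroupOf G) fun a ↦ (h a a.2).trans (dvd_of_eq ?_)
  exact ((AddSubgroup.addSubgroupOfEquivOfLe hHG).toEquiv.sum_comp fun y : H ↦ f (a + y)).symm

-- The square of the sum is a sum over shifts `k` of the character sums `∑ a, B k a`, each `0` or
-- `|A|`, with coefficients that are constant on cosets of `K`.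
theorem card_mul_card_dvd_sq_sum [Fintype A] (K : AddSubgroup A) {σ : A → ℤ}
    (B : A → AddChar A ℤ) (hσ : ∀ a, σ a ^ 2 = 1) (hB : ∀ a k, σ (a + k) = σ a * σ k * B k a)
    (hK : ∀ a, ∀ y ∈ K, σ (a + y) = σ a) :
    (Nat.card A * Nat.card K : ℤ) ∣ (∑ a, σ a) ^ 2 := by
  classical
  have hsq : (∑ a, σ a) ^ 2 = ∑ k, σ k * ∑ a, B k a := by
    calc (∑ a, σ a) ^ 2 = ∑ a, σ a * ∑ k, σ (a + k) := by
          rw [sq, sum_mul]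
          exact sum_congr rfl fun a _ ↦ congrArg _ (Equiv.sum_comp (Equiv.addLeft a) σ).symm
      _ = ∑ k, ∑ a, σ a * σ (a + k) := by
          simp only [mul_sum]
          exact sum_comm
      _ = ∑ k, σ k * ∑ a, B k a := by
          simp only [mul_sum]
          refine sum_congr rfl fun k _ ↦ sum_congr rfl fun a _ ↦ ?_
          rw [hB]
          linear_combination (σ k * B k a) * hσ a
  have hBK : ∀ k, ∀ y ∈ K, B (k + y) = B k := fun k y hy ↦ by
    have hBeq : ∀ k a, B k a = σ a * σ k * σ (a + k) := fun k a ↦ by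
      linear_combination (-σ a * σ k) * hB a k - B k a * (σ k ^ 2 * hσ a + hσ k)
    ext a
    rw [hBeq, hBeq, ← add_assoc, hK _ y hy, hK _ y hy]
  rw [hsq, mul_comm]
  refine dvd_sum_of_dvd_sum_coset K fun k ↦ ?_
  have hcoset : ∑ y : K, σ (k + y) * ∑ a, B (k + y) a = Nat.card K * (σ k * ∑ a, B k a) := by
    simp [hK, hBK]
  rw [hcoset, AddChar.sum_eq_ite]
  split_ifs <;> simp [mul_dvd_mul_left]

theorem card_filter_nsmul_eq [DecidableEq A] {c t : A} [Decidable (t ∈ AddSubgroup.zmultiples c)]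
    {N : ℕ} (hN : N ≠ 0) (hcN : addOrderOf c ∣ N) :
    #{i ∈ range N | i • c = t} =
      if t ∈ AddSubgroup.zmultiples c then N / addOrderOf c else 0 := by
  have hc : 0 < addOrderOf c := Nat.pos_of_dvd_of_pos hcN hN.bot_lt
  split_ifs with ht
  · obtain ⟨j, rfl⟩ := (addOrderOf_pos_iff.mp hc).mem_multiples_iff_mem_zmultiples.mpr ht
    have hcount := Nat.count_modEq_card N hc j
    simpa [Nat.mod_eq_zero_of_dvd hcN, Nat.count_eq_card_filter_range,
      ← nsmul_eq_nsmul_iff_modEq] using hcount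
  · rw [card_eq_zero, filter_eq_empty_iff]
    rintro i - rfl
    exact ht (AddSubgroup.nsmul_mem_zmultiples c i)

end FiniteGroups

section Polynomials

theorem totalDegree_bind₁_le {R σ τ : Type*} [CommSemiring R] {f : σ → MvPolynomial τ R} {d : ℕ}
    (hf : ∀ i, (f i).totalDegree ≤ d) (φ : MvPolynomial σ R) :
    (bind₁ f φ).totalDegree ≤ φ.totalDegree * d := by
  conv_lhs => rw [φ.as_sum, map_sum]
  refine totalDegree_finsetSum_le fun s hs ↦ ?_
  rw [bind₁_monomial]
  calc (C (coeff s φ) * ∏ i ∈ s.support, f i ^ s i).totalDegree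
      ≤ ∑ i ∈ s.support, (f i ^ s i).totalDegree := by
        grw [totalDegree_mul, totalDegree_C, zero_add, totalDegree_finsetProd]
    _ ≤ ∑ i ∈ s.support, s i * d := by
        gcongr with i
        grw [totalDegree_pow, hf i]
    _ = s.degree * d := by rw [← sum_mul]; rfl
    _ ≤ φ.totalDegree * d := Nat.mul_le_mul_right d (le_totalDegree hs)

variable {R σ : Type*} [CommRing R]

lemma eval_monomial_eq_mul_prod_toMultiset (x : σ → R) (s : σ →₀ ℕ) (a : R) :
    eval x (monomial s a) = a * (s.toMultiset.map x).prod := by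
  rw [eval_monomial, Finsupp.toMultiset_map, Finsupp.prod_toMultiset,
    Finsupp.prod_mapDomain_index (by simp) (by simp [pow_add])]

theorem exists_eval_monomial_eq_of_degree_le_two {s : σ →₀ ℕ} (hs : s.degree ≤ 2) (a : R) :
    ∃ (c : R) (l : Module.Dual R (σ → R)) (β : LinearMap.BilinForm R (σ → R)),
      ∀ x, eval x (monomial s a) = c + l x + β x x := by
  simp only [eval_monomial_eq_mul_prod_toMultiset]
  have hcard : s.toMultiset.card ≤ 2 := by rwa [Finsupp.card_toMultiset]
  generalize s.toMultiset = t at hcard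
  interval_cases ht : t.card
  · rw [Multiset.card_eq_zero] at ht
    exact ⟨a, 0, 0, by simp [ht]⟩
  · obtain ⟨i, rfl⟩ := Multiset.card_eq_one.mp ht
    exact ⟨0, a • LinearMap.proj i, 0, by simp⟩
  · obtain ⟨i, j, rfl⟩ := Multiset.card_eq_two.mp ht
    exact ⟨0, 0, (a • LinearMap.proj i).smulRight (LinearMap.proj j), by simp [mul_assoc]⟩

theorem exists_eval_eq_of_totalDegree_le_two {f : MvPolynomial σ R} (hf : f.totalDegree ≤ 2) :
    ∃ (c : R) (l : Module.Dual R (σ → R)) (β : LinearMap.BilinForm R (σ → R)),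
      ∀ x, eval x f = c + l x + β x x := by
  choose c l β h using fun s : f.support ↦
    exists_eval_monomial_eq_of_degree_le_two ((le_totalDegree s.2).trans hf) (f.coeff s)
  refine ⟨∑ s, c s, ∑ s, l s, ∑ s, β s, fun x ↦ ?_⟩
  calc eval x f = ∑ s : f.support, eval x (monomial (s : σ →₀ ℕ) (f.coeff s)) := by
        conv_lhs => rw [f.as_sum, map_sum, ← sum_coe_sort]
    _ = _ := by simp [h, LinearMap.sum_apply, sum_add_distrib]

end Polynomials

section Dyadic

theorem natCast_dvd_natCast_iff_of_dvd {n d : ℕ} (hd : d ∣ n) {m : ℕ} :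
    (d : ZMod n) ∣ m ↔ d ∣ m := by
  refine ⟨fun h ↦ ?_, Nat.cast_dvd_cast⟩
  have h' := map_dvd (ZMod.castHom hd (ZMod d)) h
  rwa [map_natCast, map_natCast, ZMod.natCast_self, zero_dvd_iff, ZMod.natCast_eq_zero_iff] at h'

lemma natCast_pow_self_eq_zero (p r : ℕ) : (p : ZMod (p ^ r)) ^ r = 0 := by
  rw [← Nat.cast_pow, ZMod.natCast_self]

theorem exists_associated_pow {p r : ℕ} (hp : p.Prime) (t : ZMod (p ^ r)) :
    ∃ a ≤ r, Associated (p ^ a : ZMod (p ^ r)) t := by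
  have : NeZero (p ^ r) := ⟨pow_ne_zero r hp.ne_zero⟩
  have hzero := natCast_pow_self_eq_zero p r
  obtain ⟨m, rfl⟩ := ZMod.natCast_zmod_surjective t
  obtain rfl | hm := eq_or_ne m 0
  · exact ⟨r, le_rfl, by simp [hzero]⟩
  obtain ⟨a, u, hu, rfl⟩ := Nat.exists_eq_pow_mul_and_not_dvd hm p hp.ne_one
  have hunit : IsUnit (u : ZMod (p ^ r)) :=
    (ZMod.isUnit_iff_coprime u _).mpr (((hp.coprime_iff_not_dvd.mpr hu).symm).pow_right r)
  obtain har | hra := le_total a r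
  · exact ⟨a, har, hunit.unit, by simp⟩
  · exact ⟨r, le_rfl, by simp [hzero, pow_eq_zero_of_le hra hzero]⟩

variable {r b : ℕ}

lemma two_pow_dvd_natCast_iff (hb : b ≤ r) {m : ℕ} : (2 : ZMod (2 ^ r)) ^ b ∣ m ↔ 2 ^ b ∣ m := by
  simpa using natCast_dvd_natCast_iff_of_dvd (m := m) (pow_dvd_pow 2 hb)

lemma two_pow_succ_dvd_natCast_mul_two_pow_iff (hb : b < r) {m : ℕ} :
    (2 : ZMod (2 ^ r)) ^ (b + 1) ∣ m * 2 ^ b ↔ Even m := by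
  have h := two_pow_dvd_natCast_iff (Nat.succ_le_of_lt hb) (m := m * 2 ^ b)
  rw [Nat.cast_mul, Nat.cast_pow, Nat.cast_ofNat] at h
  rw [h, pow_succ', Nat.mul_dvd_mul_iff_right (by positivity), even_iff_two_dvd]

lemma exists_natCast_mul_two_pow_eq {t : ZMod (2 ^ r)} (ht : 2 ^ b ∣ t) :
    ∃ m : ℕ, (m * 2 ^ b : ZMod (2 ^ r)) = t := by
  obtain ⟨c, rfl⟩ := ht
  obtain ⟨m, rfl⟩ := ZMod.natCast_zmod_surjective c
  exact ⟨m, mul_comm _ _⟩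

lemma dvd_two_pow_of_not_two_pow_succ_dvd {t : ZMod (2 ^ r)} (ht : ¬2 ^ (b + 1) ∣ t) :
    t ∣ 2 ^ b := by
  obtain ⟨a, -, ha⟩ := exists_associated_pow Nat.prime_two t
  rw [Nat.cast_ofNat] at ha
  have hab : a ≤ b := by
    by_contra! hba
    exact ht ((pow_dvd_pow 2 hba).trans ha.dvd)
  exact ha.dvd'.trans (pow_dvd_pow 2 hab)

lemma two_pow_dvd_of_two_pow_succ_dvd_two_mul (hb : b < r) {t : ZMod (2 ^ r)}
    (ht : 2 ^ (b + 1) ∣ 2 * t) : 2 ^ b ∣ t := by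
  obtain ⟨m, rfl⟩ := ZMod.natCast_zmod_surjective t
  rw [show (2 * m : ZMod (2 ^ r)) = (2 * m : ℕ) by simp, two_pow_dvd_natCast_iff hb, pow_succ',
    Nat.mul_dvd_mul_iff_left two_pos] at ht
  exact (two_pow_dvd_natCast_iff hb.le).mpr ht

/-- The nontrivial character of `2 ^ b R / 2 ^ (b + 1) R`, where `R = ZMod (2 ^ r)` and `b < r`,
extended to `R` by the junk value `-1`. -/
def dyadicSign (b : ℕ) (t : ZMod (2 ^ r)) : ℤ :=
  if 2 ^ (b + 1) ∣ t then 1 else -1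

lemma dyadicSign_sq (t : ZMod (2 ^ r)) : dyadicSign b t ^ 2 = 1 := by
  rw [dyadicSign]
  split_ifs <;> rfl

lemma dyadicSign_of_dvd {t : ZMod (2 ^ r)} (ht : 2 ^ (b + 1) ∣ t) : dyadicSign b t = 1 :=
  if_pos ht

lemma dyadicSign_natCast_mul_two_pow (hb : b < r) (m : ℕ) :
    dyadicSign b (m * 2 ^ b : ZMod (2 ^ r)) = (-1) ^ m := by
  simp only [dyadicSign, two_pow_succ_dvd_natCast_mul_two_pow_iff hb, neg_one_pow_eq_ite]

lemma antiperiodic_add_eq_dyadicSign_mul (hb : b < r) {χ : ZMod (2 ^ r) → ℤ}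
    (hχ : χ.Antiperiodic (2 ^ b)) (a : ZMod (2 ^ r)) {t : ZMod (2 ^ r)} (ht : 2 ^ b ∣ t) :
    χ (a + t) = dyadicSign b t * χ a := by
  obtain ⟨m, rfl⟩ := exists_natCast_mul_two_pow_eq ht
  rw [hχ.add_nat_mul_eq, dyadicSign_natCast_mul_two_pow hb]

lemma dyadicSign_add (hb : b < r) {s t : ZMod (2 ^ r)} (hs : 2 ^ b ∣ s) (ht : 2 ^ b ∣ t) :
    dyadicSign b (s + t) = dyadicSign b s * dyadicSign b t := by
  obtain ⟨m, rfl⟩ := exists_natCast_mul_two_pow_eq hs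
  obtain ⟨n, rfl⟩ := exists_natCast_mul_two_pow_eq ht
  rw [← add_mul, ← Nat.cast_add]
  simp only [dyadicSign_natCast_mul_two_pow hb, pow_add]

end Dyadic

section Antiperiodic

theorem sum_eq_zero_of_antiperiodic {A : Type*} [AddGroup A] [Fintype A] {φ : A → ℤ} {c : A}
    (hφ : φ.Antiperiodic c) : ∑ a, φ a = 0 := by
  have h := Equiv.sum_comp (Equiv.addRight c) φ
  simp only [Equiv.coe_addRight, hφ _, sum_neg_distrib] at h
  linarith

theorem map_add_add_bilin_add {R V : Type*} [CommRing R] [AddCommGroup V] [Module R V]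
    (L : Module.Dual R V) (β : LinearMap.BilinForm R V) (u v : V) :
    L (u + v) + β (u + v) (u + v) = L u + β u u + (L v + β v v) + (β u v + β v u) := by
  simp only [map_add, LinearMap.add_apply]
  ring

variable {r b : ℕ} {V : Type*} [AddCommGroup V] [Module (ZMod (2 ^ r)) V] [Fintype V]
  {K : Submodule (ZMod (2 ^ r)) V} {L : Module.Dual (ZMod (2 ^ r)) V}
  {β : LinearMap.BilinForm (ZMod (2 ^ r)) V} {χ : ZMod (2 ^ r) → ℤ}

theorem card_mul_card_dvd_sq_sum_dyadicSign (hb : b < r) (hL : ∀ v, 2 ^ b ∣ L v)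
    (hβ : ∀ u v, 2 ^ b ∣ β u v) (hLK : ∀ k ∈ K, 2 ^ (b + 1) ∣ L k)
    (hβK : ∀ v, ∀ k ∈ K, 2 ^ (b + 1) ∣ β v k ∧ 2 ^ (b + 1) ∣ β k v) :
    (Nat.card V * Nat.card K : ℤ) ∣ (∑ v, dyadicSign b (L v + β v v)) ^ 2 := by
  let B : V → AddChar V ℤ := fun v ↦
    { toFun u := dyadicSign b (β u v + β v u)
      map_zero_eq_one' := by simp [dyadicSign]
      map_add_eq_mul' u u' := by
        rw [← dyadicSign_add hb (dvd_add (hβ _ _) (hβ _ _)) (dvd_add (hβ _ _) (hβ _ _))]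
        simp only [map_add, LinearMap.add_apply]
        ring_nf }
  refine card_mul_card_dvd_sq_sum K.toAddSubgroup B (fun _ ↦ dyadicSign_sq _) (fun u v ↦ ?_)
    fun v k hk ↦ ?_
  · have hq : ∀ v, 2 ^ b ∣ L v + β v v := fun v ↦ dvd_add (hL v) (hβ v v)
    rw [map_add_add_bilin_add, dyadicSign_add hb (dvd_add (hq u) (hq v))
      (dvd_add (hβ u v) (hβ v u)), dyadicSign_add hb (hq u) (hq v)]
    rfl
  · have hdvd : 2 ^ (b + 1) ∣ L k + β k k + (β v k + β k v) :=
      dvd_add (dvd_add (hLK k hk) (hβK k k hk).1) (dvd_add (hβK v k hk).1 (hβK v k hk).2)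
    rw [map_add_add_bilin_add, add_assoc, dyadicSign_add hb (dvd_add (hL v) (hβ v v))
      ((pow_dvd_pow 2 b.le_succ).trans hdvd), dyadicSign_of_dvd hdvd, mul_one]

theorem card_mul_card_dvd_sq_sum_of_antiperiodic (hb : b < r) (hχ : χ.Antiperiodic (2 ^ b))
    (a : ZMod (2 ^ r)) (hβ : ∀ u v, 2 ^ b ∣ β u v) (hK : ∀ v, (2 : ZMod (2 ^ r)) • v ∈ K)
    (hβK : ∀ v, ∀ k ∈ K, 2 ^ (b + 1) ∣ β v k ∧ 2 ^ (b + 1) ∣ β k v) :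
    (Nat.card V * Nat.card K : ℤ) ∣ (∑ v, χ (a + L v + β v v)) ^ 2 := by
  by_cases hLK : ∀ k ∈ K, 2 ^ (b + 1) ∣ L k
  · have hL : ∀ v, 2 ^ b ∣ L v := fun v ↦ by
      refine two_pow_dvd_of_two_pow_succ_dvd_two_mul hb ?_
      rw [← smul_eq_mul, ← map_smul]
      exact hLK _ (hK v)
    have hsum : ∀ v, χ (a + L v + β v v) = dyadicSign b (L v + β v v) * χ a := fun v ↦ by
      rw [add_assoc, antiperiodic_add_eq_dyadicSign_mul hb hχ _ (dvd_add (hL v) (hβ v v))]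
    rw [sum_congr rfl fun v _ ↦ hsum v, ← sum_mul, mul_pow]
    exact (card_mul_card_dvd_sq_sum_dyadicSign hb hL hβ hLK hβK).mul_right _
  · push Not at hLK
    obtain ⟨k, hk, hLk⟩ := hLK
    obtain ⟨c, hc⟩ := dvd_two_pow_of_not_two_pow_succ_dvd hLk
    suffices h : (fun v ↦ χ (a + L v + β v v)).Antiperiodic (c • k) by
      rw [sum_eq_zero_of_antiperiodic h]
      simp
    intro v
    have hck := K.smul_mem c hk
    have hdvd : 2 ^ (b + 1) ∣ β (c • k) (c • k) + (β v (c • k) + β (c • k) v) :=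
      dvd_add (hβK _ _ hck).1 (dvd_add (hβK v _ hck).1 (hβK v _ hck).2)
    have hsplit : a + L (v + c • k) + β (v + c • k) (v + c • k) =
        a + L v + β v v + 2 ^ b + (β (c • k) (c • k) + (β v (c • k) + β (c • k) v)) := by
      rw [add_assoc, map_add_add_bilin_add, map_smul, smul_eq_mul, mul_comm, ← hc]
      ring
    change χ (a + L (v + c • k) + β (v + c • k) (v + c • k)) = _
    rw [hsplit, antiperiodic_add_eq_dyadicSign_mul hb hχ _ ((pow_dvd_pow 2 b.le_succ).trans hdvd),
      dyadicSign_of_dvd hdvd, one_mul, hχ]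

end Antiperiodic

section Box

variable {r b s s' : ℕ} {σ : Type*}

lemma mem_zmultiples_iff_dvd {n : ℕ} {c t : ZMod n} : t ∈ AddSubgroup.zmultiples c ↔ c ∣ t := by
  rw [AddSubgroup.mem_zmultiples_iff]
  constructor
  · rintro ⟨m, rfl⟩
    exact ⟨m, by rw [zsmul_eq_mul, mul_comm]⟩
  · rintro ⟨x, rfl⟩
    obtain ⟨m, rfl⟩ := ZMod.intCast_surjective x
    exact ⟨m, by rw [zsmul_eq_mul, mul_comm]⟩

lemma addOrderOf_two_pow (a : ℕ) : addOrderOf (2 ^ a : ZMod (2 ^ r)) = 2 ^ (r - a) := by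
  have h := ZMod.addOrderOf_coe (2 ^ a) (n := 2 ^ r) (by positivity)
  obtain har | hra := le_total a r
  · rwa [Nat.gcd_eq_right (pow_dvd_pow 2 har), Nat.pow_div har two_pos, Nat.cast_pow] at h
  · rwa [Nat.gcd_eq_left (pow_dvd_pow 2 hra), Nat.div_self (by positivity), Nat.cast_pow,
      ← pow_zero 2, ← Nat.sub_eq_zero_of_le hra] at h

lemma addOrderOf_of_associated_two_pow {a : ℕ} {c : ZMod (2 ^ r)} (hc : Associated (2 ^ a) c) :
    addOrderOf c = 2 ^ (r - a) := by
  rw [← addOrderOf_two_pow, ← Nat.card_zmultiples, ← Nat.card_zmultiples]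
  suffices h : AddSubgroup.zmultiples c = AddSubgroup.zmultiples (2 ^ a) by rw [h]
  ext t
  rw [mem_zmultiples_iff_dvd, mem_zmultiples_iff_dvd, hc.dvd_iff_dvd_left]

lemma card_two_pow_dvd (a : ℕ) : Nat.card {t : ZMod (2 ^ r) // 2 ^ a ∣ t} = 2 ^ (r - a) := by
  simp only [← mem_zmultiples_iff_dvd]
  exact (Nat.card_zmultiples _).trans (addOrderOf_two_pow a)

/-- The submodule of points `p` with `2 ^ e t ∣ p t` for every coordinate `t`. -/
def dyadicBox (r : ℕ) (e : σ → ℕ) : Submodule (ZMod (2 ^ r)) (σ → ZMod (2 ^ r)) :=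
  Submodule.pi Set.univ fun t ↦ Ideal.span {2 ^ e t}

lemma mem_dyadicBox {e : σ → ℕ} {p : σ → ZMod (2 ^ r)} :
    p ∈ dyadicBox r e ↔ ∀ t, 2 ^ e t ∣ p t := by
  simp [dyadicBox, Ideal.mem_span_singleton]

noncomputable instance [Finite σ] (e : σ → ℕ) : Fintype (dyadicBox r e) := Fintype.ofFinite _

lemma dyadicBox_anti {e e' : σ → ℕ} (h : e ≤ e') : dyadicBox r e' ≤ dyadicBox r e := fun _ hp ↦
  mem_dyadicBox.mpr fun t ↦ (pow_dvd_pow 2 (h t)).trans (mem_dyadicBox.mp hp t)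

lemma card_dyadicBox [Fintype σ] (e : σ → ℕ) : Nat.card (dyadicBox r e) = 2 ^ ∑ t, (r - e t) := by
  rw [Nat.card_congr ((Equiv.subtypeEquivRight fun p ↦ mem_dyadicBox).trans
    (Equiv.subtypePiEquivPi (p := fun {t} (x : ZMod (2 ^ r)) ↦ 2 ^ e t ∣ x))), Nat.card_pi]
  simp only [card_two_pow_dvd, prod_pow_eq_pow_sum]

lemma exists_two_pow_smul_eq_of_mem_dyadicBox {e : σ → ℕ} (he : ∀ t, s ≤ e t)
    {p : σ → ZMod (2 ^ r)} (hp : p ∈ dyadicBox r e) :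
    ∃ x : σ → ZMod (2 ^ r), (2 : ZMod (2 ^ r)) ^ s • x = p := by
  choose x hx using fun t ↦ (pow_dvd_pow 2 (he t)).trans (mem_dyadicBox.mp hp t)
  exact ⟨x, funext fun t ↦ (hx t).symm⟩

lemma two_pow_dvd_bilin_of_mem_dyadicBox (β : LinearMap.BilinForm (ZMod (2 ^ r)) (σ → ZMod (2 ^ r)))
    {d d' : σ → ℕ} {p p' : σ → ZMod (2 ^ r)} (hb : b ≤ s + s')
    (hp : p ∈ dyadicBox r fun t ↦ max s (d t)) (hp' : p' ∈ dyadicBox r fun t ↦ max s' (d' t)) :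
    2 ^ b ∣ β p p' := by
  obtain ⟨x, rfl⟩ := exists_two_pow_smul_eq_of_mem_dyadicBox (fun t ↦ le_max_left s (d t)) hp
  obtain ⟨x', rfl⟩ := exists_two_pow_smul_eq_of_mem_dyadicBox (fun t ↦ le_max_left s' (d' t)) hp'
  refine (pow_dvd_pow 2 hb).trans ⟨β x x', ?_⟩
  simp only [map_smul, LinearMap.smul_apply, smul_eq_mul]
  ring

lemma two_smul_mem_dyadicBox_max {d : σ → ℕ} {p : σ → ZMod (2 ^ r)} (hs : s' ≤ s + 1)
    (hp : p ∈ dyadicBox r fun t ↦ max s (d t)) :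
    (2 : ZMod (2 ^ r)) • p ∈ dyadicBox r fun t ↦ max s' (d t) := by
  simp only [mem_dyadicBox, Pi.smul_apply, smul_eq_mul] at hp ⊢
  intro t
  obtain h | h := le_total s' (d t)
  · rw [max_eq_right h]
    exact ((pow_dvd_pow 2 (le_max_right s (d t))).trans (hp t)).mul_left 2
  · rw [max_eq_left h]
    calc (2 : ZMod (2 ^ r)) ^ s' ∣ 2 * 2 ^ s := by
          rw [← pow_succ']
          exact pow_dvd_pow 2 hs
      _ ∣ 2 * p t := mul_dvd_mul_left 2 ((pow_dvd_pow 2 (le_max_left s (d t))).trans (hp t))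

variable [Fintype σ]

/-- The exponent for which `2 ^ boxExponent r d b` is the product of the cardinalities of the two
sub-boxes of `dyadicBox r d` cut out by divisibility of all coordinates by `2 ^ ⌊b/2⌋`, respectively
by `2 ^ ⌈b/2⌉`. Its half, rounded up, is the exponent in the divisibility results. -/
def boxExponent (r : ℕ) (d : σ → ℕ) (b : ℕ) : ℕ :=
  ∑ t, (r - max (b / 2) (d t)) + ∑ t, (r - max ((b + 1) / 2) (d t))

theorem two_pow_boxExponent_dvd_sq_sum_coset {f : MvPolynomial σ (ZMod (2 ^ r))}
    (hf : f.totalDegree ≤ 2) (hb : b < r) {χ : ZMod (2 ^ r) → ℤ} (hχ : χ.Antiperiodic (2 ^ b))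
    (d : σ → ℕ) (x : σ → ZMod (2 ^ r)) :
    2 ^ boxExponent r d (b + 1) ∣ (∑ y : dyadicBox r fun t ↦ max ((b + 1) / 2) (d t),
      χ (eval (x + (y : σ → ZMod (2 ^ r))) f)) ^ 2 := by
  obtain ⟨c, l, β, hcl⟩ := exists_eval_eq_of_totalDegree_le_two hf
  set H := dyadicBox r fun t ↦ max ((b + 1) / 2) (d t)
  set K := dyadicBox r fun t ↦ max ((b + 1 + 1) / 2) (d t)
  have hKH : K ≤ H := dyadicBox_anti fun t ↦
    max_le_max_right _ (Nat.div_le_div_right (b + 1).le_succ)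
  have hcard : (Nat.card H * Nat.card (K.submoduleOf H) : ℤ) = 2 ^ boxExponent r d (b + 1) := by
    rw [Nat.card_congr (Submodule.submoduleOfEquivOfLe hKH).toEquiv, card_dyadicBox,
      card_dyadicBox, boxExponent, pow_add]
    norm_cast
  let L : Module.Dual (ZMod (2 ^ r)) (σ → ZMod (2 ^ r)) := l + β x + β.flip x
  have heval : ∀ y : H, eval (x + (y : σ → ZMod (2 ^ r))) f =
      eval x f + L.domRestrict H y + β.restrict H y y := fun y ↦ by
    rw [hcl, hcl, add_assoc, map_add_add_bilin_add]
    simp only [LinearMap.domRestrict_apply, LinearMap.add_apply, LinearMap.BilinForm.flip_apply,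
      LinearMap.BilinForm.restrict_apply, L]
    ring
  simp only [heval, ← hcard]
  exact card_mul_card_dvd_sq_sum_of_antiperiodic hb hχ _
    (fun u v ↦ two_pow_dvd_bilin_of_mem_dyadicBox β (by omega) u.2 v.2)
    (fun v ↦ two_smul_mem_dyadicBox_max (by omega) v.2)
    fun v k hk ↦ ⟨two_pow_dvd_bilin_of_mem_dyadicBox β (by omega) v.2 hk,
      two_pow_dvd_bilin_of_mem_dyadicBox β (by omega) hk v.2⟩

theorem two_pow_dvd_sum_dyadicBox_of_antiperiodic {f : MvPolynomial σ (ZMod (2 ^ r))}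
    (hf : f.totalDegree ≤ 2) (hb : b < r) {χ : ZMod (2 ^ r) → ℤ} (hχ : χ.Antiperiodic (2 ^ b))
    (d : σ → ℕ) :
    2 ^ ((boxExponent r d (b + 1) + 1) / 2) ∣ ∑ p : dyadicBox r d, χ (eval p f) := by
  let H := dyadicBox r fun t ↦ max ((b + 1) / 2) (d t)
  let _ : Fintype H.toAddSubgroup := inferInstanceAs (Fintype H)
  let _ : Fintype (dyadicBox r d).toAddSubgroup := inferInstanceAs (Fintype (dyadicBox r d))
  refine dvd_sum_subgroup_of_dvd_sum_coset (f := fun p ↦ χ (eval p f))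
    (show H.toAddSubgroup ≤ (dyadicBox r d).toAddSubgroup from
      dyadicBox_anti fun t ↦ le_max_right _ _) fun x _ ↦ ?_
  exact pow_half_dvd_of_pow_dvd_sq Int.prime_two
    (two_pow_boxExponent_dvd_sq_sum_coset hf hb hχ d x)

lemma boxExponent_zero (d : σ → ℕ) : boxExponent r d 0 = 2 * ∑ t, (r - d t) := by
  simp [boxExponent, two_mul]

lemma boxExponent_succ_add_card_le (hb : b < r) (d : σ → ℕ) :
    boxExponent r d (b + 1) + #{t | d t = 0} ≤ boxExponent r d b := by
  have hsum : ∑ t, (r - max ((b + 1 + 1) / 2) (d t)) + #{t | d t = 0} ≤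
      ∑ t, (r - max (b / 2) (d t)) := by
    rw [card_filter, ← sum_add_distrib]
    gcongr with t
    split_ifs <;> omega
  rw [boxExponent, boxExponent]
  linarith

lemma boxExponent_self_add_le (hb : b ≤ r) {d : σ → ℕ} (hd : 1 < #{t | d t = 0}) :
    boxExponent r d r + 2 * r ≤ boxExponent r d b + 2 * b := by
  refine Nat.decreasingInduction
    (motive := fun b _ ↦ boxExponent r d r + 2 * r ≤ boxExponent r d b + 2 * b)
    (fun b hb ih ↦ ?_) le_rfl hb
  have := boxExponent_succ_add_card_le hb d
  omega

lemma antiperiodic_two_mul_ite_sub_ite (hb : b < r) :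
    (fun t : ZMod (2 ^ r) ↦ 2 * (if 2 ^ (b + 1) ∣ t then 1 else 0) -
      (if 2 ^ b ∣ t then 1 else 0 : ℤ)).Antiperiodic (2 ^ b) := by
  intro t
  by_cases ht : 2 ^ b ∣ t
  · obtain ⟨m, rfl⟩ := exists_natCast_mul_two_pow_eq ht
    have hsucc : (m * 2 ^ b + 2 ^ b : ZMod (2 ^ r)) = (m + 1 : ℕ) * 2 ^ b := by
      push_cast
      ring
    simp only [hsucc, two_pow_succ_dvd_natCast_mul_two_pow_iff hb, dvd_mul_left, Nat.even_add_one]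
    split_ifs <;> simp_all
  · have hsucc : ∀ t : ZMod (2 ^ r), ¬2 ^ b ∣ t → ¬2 ^ (b + 1) ∣ t := fun _ h h' ↦
      h ((pow_dvd_pow 2 b.le_succ).trans h')
    have ht' : ¬2 ^ b ∣ t + 2 ^ b := by rwa [dvd_add_self_right]
    simp [ht, ht', hsucc]

theorem two_pow_dvd_two_mul_card_two_pow_dvd_eval {f : MvPolynomial σ (ZMod (2 ^ r))}
    (hf : f.totalDegree ≤ 2) (hb : b ≤ r) {d : σ → ℕ} (hd : 1 < #{t | d t = 0}) :
    2 ^ ((boxExponent r d b + 1) / 2) ∣ 2 * #{p : dyadicBox r d | 2 ^ b ∣ eval p f} := by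
  induction b with
  | zero =>
    have hcard : #{p : dyadicBox r d | 2 ^ 0 ∣ eval p f} = 2 ^ ∑ t, (r - d t) := by
      simp [← card_dyadicBox]
    rw [hcard, boxExponent_zero]
    exact (pow_dvd_pow 2 (by omega)).mul_left 2
  | succ b ih =>
    have hχ := two_pow_dvd_sum_dyadicBox_of_antiperiodic hf hb
      (antiperiodic_two_mul_ite_sub_ite hb) d
    rw [sum_sub_distrib, ← mul_sum, sum_boole, sum_boole] at hχ
    have hE := boxExponent_succ_add_card_le hb d
    have hN : 2 ^ ((boxExponent r d (b + 1) + 1) / 2) ∣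
        #{p : dyadicBox r d | 2 ^ b ∣ eval p f} := by
      refine Nat.dvd_of_mul_dvd_mul_left two_pos ((dvd_of_eq (pow_succ' _ _).symm).trans
        ((pow_dvd_pow 2 ?_).trans (ih (by omega))))
      omega
    rw [← Int.natCast_dvd_natCast, Nat.cast_pow, Nat.cast_ofNat] at hN ⊢
    simpa using dvd_add hχ hN

theorem exists_card_filter_eq_mul_natCast (w : ZMod (2 ^ r)) {q : ℕ} (hq : q ≤ r) :
    ∃ a ≤ r, r - a ≤ q ∧ ∀ t : ZMod (2 ^ r),
      #{i ∈ range (2 ^ q) | t = w * 2 ^ (r - q) * (i : ℕ)} =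
        if 2 ^ a ∣ t then 2 ^ (q - (r - a)) else 0 := by
  classical
  set c : ZMod (2 ^ r) := w * 2 ^ (r - q)
  obtain ⟨a, har, hac⟩ := exists_associated_pow Nat.prime_two c
  rw [Nat.cast_ofNat] at hac
  have horder := addOrderOf_of_associated_two_pow hac
  have hdvd : addOrderOf c ∣ 2 ^ q := by
    have hzero := natCast_pow_self_eq_zero 2 r
    rw [Nat.cast_ofNat] at hzero
    rw [addOrderOf_dvd_iff_nsmul_eq_zero, nsmul_eq_mul, Nat.cast_pow, Nat.cast_ofNat,
      mul_left_comm, ← pow_add, Nat.add_sub_of_le hq, hzero, mul_zero]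
  have hra : r - a ≤ q := (Nat.pow_dvd_pow_iff_le_right one_lt_two).mp (horder ▸ hdvd)
  refine ⟨a, har, hra, fun t ↦ ?_⟩
  have hcount := card_filter_nsmul_eq (t := t) (pow_ne_zero q two_ne_zero) hdvd
  simp only [mem_zmultiples_iff_dvd, ← hac.dvd_iff_dvd_left, horder, nsmul_eq_mul,
    Nat.pow_div hra two_pos] at hcount
  simpa only [eq_comm (a := t), mul_comm c] using hcount

theorem two_pow_dvd_two_mul_sum_card_eval_eq {f : MvPolynomial σ (ZMod (2 ^ r))}
    (hf : f.totalDegree ≤ 2) {d : σ → ℕ} (hd : 1 < #{t | d t = 0}) (w : ZMod (2 ^ r)) {q : ℕ}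
    (hq : q ≤ r) :
    2 ^ ((boxExponent r d r + 1) / 2 + q) ∣
      2 * ∑ i ∈ range (2 ^ q), #{p : dyadicBox r d | eval p f = w * 2 ^ (r - q) * (i : ℕ)} := by
  obtain ⟨a, har, hra, hcount⟩ := exists_card_filter_eq_mul_natCast w hq
  have hsum : ∑ i ∈ range (2 ^ q), #{p : dyadicBox r d | eval p f = w * 2 ^ (r - q) * (i : ℕ)} =
      #{p : dyadicBox r d | 2 ^ a ∣ eval p f} * 2 ^ (q - (r - a)) := by
    calc _ = ∑ p : dyadicBox r d, #{i ∈ range (2 ^ q) | eval p f = w * 2 ^ (r - q) * (i : ℕ)} := by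
          simp only [card_filter]
          exact sum_comm
      _ = _ := by simp only [hcount, ← sum_filter, sum_const, smul_eq_mul]
  have hE := boxExponent_self_add_le har hd
  rw [hsum, ← mul_assoc]
  calc 2 ^ ((boxExponent r d r + 1) / 2 + q)
      ∣ 2 ^ ((boxExponent r d a + 1) / 2) * 2 ^ (q - (r - a)) := by
        rw [← pow_add]
        exact pow_dvd_pow 2 (by omega)
    _ ∣ _ := mul_dvd_mul_right (two_pow_dvd_two_mul_card_two_pow_dvd_eval hf har hd) _

end Box

section LastVariable

variable {r v m : ℕ}

lemma bijective_two_pow_mul (hv : v ≤ r) : Function.Bijective fun j : Fin (2 ^ v) ↦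
    (⟨2 ^ (r - v) * (j : ℕ), dvd_mul_right _ _⟩ : {t : ZMod (2 ^ r) // 2 ^ (r - v) ∣ t}) := by
  refine Function.Surjective.bijective_of_nat_card_le ?_ ?_
  · rintro ⟨_, c, rfl⟩
    obtain ⟨k, rfl⟩ := ZMod.natCast_zmod_surjective c
    refine ⟨⟨k % 2 ^ v, Nat.mod_lt _ (by positivity)⟩, Subtype.ext ?_⟩
    have hmod : 2 ^ (r - v) * (k % 2 ^ v) ≡ 2 ^ (r - v) * k [MOD 2 ^ r] := by
      have h := (Nat.mod_modEq k (2 ^ v)).mul_left' (2 ^ (r - v))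
      rwa [← pow_add, Nat.sub_add_cancel hv] at h
    simpa using (ZMod.natCast_eq_natCast_iff _ _ _).mpr hmod
  · rw [card_two_pow_dvd, Nat.sub_sub_self hv, Nat.card_fin]

/-- The divisibility exponents of a box in which only the last coordinate is constrained. -/
def lastExponent (m a : ℕ) : Fin (m + 1) → ℕ := Fin.snoc (fun _ ↦ 0) a

lemma snoc_mem_dyadicBox_iff {a : ℕ} {x : Fin m → ZMod (2 ^ r)} {y : ZMod (2 ^ r)} :
    (Fin.snoc x y : Fin (m + 1) → ZMod (2 ^ r)) ∈ dyadicBox r (lastExponent m a) ↔ 2 ^ a ∣ y := by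
  simp [mem_dyadicBox, lastExponent, Fin.forall_fin_succ']

lemma bijective_snoc_two_pow_mul (hv : v ≤ r) :
    Function.Bijective fun z : Fin (2 ^ v) × (Fin m → ZMod (2 ^ r)) ↦
      (⟨Fin.snoc z.2 (2 ^ (r - v) * (z.1 : ℕ)), snoc_mem_dyadicBox_iff.mpr (dvd_mul_right _ _)⟩ :
        dyadicBox r (lastExponent m (r - v))) := by
  constructor
  · rintro ⟨j, x⟩ ⟨j', x'⟩ h
    obtain ⟨hx, hj⟩ := Fin.snoc_inj (α := fun _ ↦ ZMod (2 ^ r)).mp (congrArg Subtype.val h)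
    exact Prod.ext ((bijective_two_pow_mul hv).injective (Subtype.ext hj)) hx
  · rintro ⟨p, hp⟩
    cases p using Fin.snocCases with | snoc x y =>
    obtain ⟨j, hj⟩ := (bijective_two_pow_mul hv).surjective ⟨y, snoc_mem_dyadicBox_iff.mp hp⟩
    exact ⟨(j, x), Subtype.ext (congrArg (Fin.snoc (α := fun _ ↦ ZMod (2 ^ r)) x)
      (congrArg Subtype.val hj))⟩

lemma card_filter_dyadicBox_lastExponent (hv : v ≤ r) (P : (Fin (m + 1) → ZMod (2 ^ r)) → Prop)
    [DecidablePred P] :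
    #{p : dyadicBox r (lastExponent m (r - v)) | P p} = ∑ j : Fin (2 ^ v),
      Nat.card {x : Fin m → ZMod (2 ^ r) // P (Fin.snoc x (2 ^ (r - v) * (j : ℕ)))} := by
  simp only [Nat.card_eq_fintype_card, Fintype.card_subtype, card_filter]
  rw [← Fintype.sum_prod_type']
  exact (Fintype.sum_bijective _ (bijective_snoc_two_pow_mul hv) _ _ fun _ ↦ rfl).symm

lemma pow_pred_dvd_of_pow_dvd_mul {p N S : ℕ} (hp : 0 < p) (h : p ^ N ∣ p * S) :
    p ^ (N - 1) ∣ S := by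
  obtain _ | N := N
  · simp
  · exact Nat.dvd_of_mul_dvd_mul_left hp (by rwa [pow_succ'] at h)

lemma le_card_lastExponent_eq_zero (m a : ℕ) : m ≤ #{t | lastExponent m a t = 0} := by
  calc m = #(univ.map Fin.castSuccEmb) := by simp
    _ ≤ #{t | lastExponent m a t = 0} := card_le_card fun t ht ↦ by
      obtain ⟨i, rfl⟩ : ∃ i : Fin m, i.castSucc = t := by simpa using ht
      rw [mem_filter_univ, lastExponent, Fin.snoc_castSucc (α := fun _ ↦ ℕ)]

lemma boxExponent_lastExponent (hv : v ≤ r) :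
    boxExponent r (lastExponent m (r - v)) r = r * m + min (2 * v) r := by
  have hlast : r - max (r / 2) (r - v) + (r - max ((r + 1) / 2) (r - v)) = min (2 * v) r := by
    omega
  have hcast : r - r / 2 + (r - (r + 1) / 2) = r := by omega
  simp only [boxExponent, lastExponent, Fin.sum_univ_castSucc, Fin.snoc_castSucc, Fin.snoc_last,
    sum_const, card_univ, Fintype.card_fin, smul_eq_mul, Nat.max_zero]
  linear_combination hlast + m * hcast

/-- The substitution that leaves `x` in place and puts `T x + u y` in the last coordinate of the
point `(x, y)`. -/
noncomputable def graphSubst {R : Type*} [CommRing R] (T : MvPolynomial (Fin m) R) (u : R) :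
    Fin (m + 1) → MvPolynomial (Fin (m + 1)) R :=
  Fin.snoc (fun t ↦ X t.castSucc) (rename Fin.castSucc T + C u * X (Fin.last m))

/-- The polynomial whose value at `(x, y)` is `Q (x, T x + u y) - (k + g y)`. -/
noncomputable def graphPolynomial {R : Type*} [CommRing R] (Q : MvPolynomial (Fin (m + 1)) R)
    (T : MvPolynomial (Fin m) R) (k g u : R) : MvPolynomial (Fin (m + 1)) R :=
  bind₁ (graphSubst T u) Q - (C k + C g * X (Fin.last m))

variable {R : Type*} [CommRing R] {Q : MvPolynomial (Fin (m + 1)) R} {T : MvPolynomial (Fin m) R}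

lemma eval_graphPolynomial (k g u : R) (x : Fin m → R) (y : R) :
    eval (Fin.snoc x y : Fin (m + 1) → R) (graphPolynomial Q T k g u) =
      eval (Fin.snoc x (eval x T + u * y) : Fin (m + 1) → R) Q - (k + g * y) := by
  have hbind : eval (Fin.snoc x y : Fin (m + 1) → R) (bind₁ (graphSubst T u) Q) =
      eval (Fin.snoc x (eval x T + u * y) : Fin (m + 1) → R) Q := by
    refine (eval₂Hom_bind₁ _ _ _ _).trans (congrArg (eval · Q) (funext fun t ↦ ?_))
    cases t using Fin.lastCases <;>
      simp [graphSubst, eval_rename, Function.comp_def, coe_eval₂Hom, eval₂_id]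
  simp [graphPolynomial, hbind]

lemma card_eval_graphPolynomial_eq (k g u c y : R) :
    Nat.card {x : Fin m → R //
      eval (Fin.snoc x y : Fin (m + 1) → R) (graphPolynomial Q T k g u) = c} =
    Nat.card {x : Fin m → R //
      eval (Fin.snoc x (eval x T + u * y) : Fin (m + 1) → R) Q = k + c + g * y} :=
  Nat.card_congr <| Equiv.subtypeEquivRight fun x ↦ by
    rw [eval_graphPolynomial, sub_eq_iff_eq_add', add_right_comm]

lemma totalDegree_C_mul_X_le {σ : Type*} (a : R) (t : σ) : (C a * X t).totalDegree ≤ 1 := by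
  simpa [C_mul_X_eq_monomial] using totalDegree_monomial_le (Finsupp.single t 1) a

lemma totalDegree_graphSubst_le (hT : T.totalDegree ≤ 1) (u : R) (t : Fin (m + 1)) :
    (graphSubst T u t).totalDegree ≤ 1 := by
  cases t using Fin.lastCases with
  | last =>
    simp only [graphSubst, Fin.snoc_last]
    grw [totalDegree_add, totalDegree_rename_le, hT, totalDegree_C_mul_X_le, max_self]
  | cast t =>
    simp only [graphSubst, Fin.snoc_castSucc]
    simpa using totalDegree_C_mul_X_le (1 : R) t.castSucc

lemma totalDegree_graphPolynomial_le (hQ : Q.totalDegree ≤ 2) (hT : T.totalDegree ≤ 1) (k g u : R) :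
    (graphPolynomial Q T k g u).totalDegree ≤ 2 := by
  grw [graphPolynomial, totalDegree_sub, totalDegree_add, totalDegree_C, totalDegree_C_mul_X_le,
    totalDegree_bind₁_le (totalDegree_graphSubst_le hT u), hQ]
  rfl

end LastVariable

/-- Main theorem: for `Q` of degree ≤ 2 in `n ≥ 3` variables `(x, z)` over `ℤ/2^r`,
`q, v ≤ r`, elements `k, w, g, u` and linear `T(x)`, the double sum of constrained
solution counts is divisible by `2^{⌈(r(n-1)+min(2v,r))/2⌉+q-1}`. -/
theorem stmt_2 (r : ℕ) (hr : 1 ≤ r) (n : ℕ) (hn : 3 ≤ n)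
    (Q : MvPolynomial (Fin n) (ZMod (2 ^ r))) (hQ : Q.totalDegree ≤ 2)
    (q v : ℕ) (hq : q ≤ r) (hv : v ≤ r)
    (k w g u : ZMod (2 ^ r))
    (T : MvPolynomial (Fin (n - 1)) (ZMod (2 ^ r))) (hT : T.totalDegree ≤ 1) :
    (2 ^ ((r * (n - 1) + min (2 * v) r + 1) / 2 + q - 1) : ℕ) ∣
    ∑ i : Fin (2 ^ q), ∑ j : Fin (2 ^ v),
      Nat.card {x : Fin (n - 1) → ZMod (2 ^ r) //
        MvPolynomial.eval
          (fun t : Fin n => if h : (t : ℕ) < n - 1 then x ⟨t, h⟩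
            else MvPolynomial.eval x T
              + u * (2 : ZMod (2 ^ r)) ^ (r - v) * ((j : ℕ) : ZMod (2 ^ r))) Q
          = k + w * (2 : ZMod (2 ^ r)) ^ (r - q) * ((i : ℕ) : ZMod (2 ^ r))
              + g * (2 : ZMod (2 ^ r)) ^ (r - v) * ((j : ℕ) : ZMod (2 ^ r))} := by
  obtain ⟨m, rfl⟩ : ∃ m, n = m + 1 := ⟨n - 1, by omega⟩
  have hd : 1 < #{t | lastExponent m (r - v) t = 0} :=
    lt_of_lt_of_le (by omega) (le_card_lastExponent_eq_zero m (r - v))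
  have hdvd := two_pow_dvd_two_mul_sum_card_eval_eq
    (totalDegree_graphPolynomial_le hQ hT k g u) hd w hq
  refine pow_pred_dvd_of_pow_dvd_mul two_pos ?_
  rw [boxExponent_lastExponent hv, sum_range] at hdvd
  refine hdvd.trans (dvd_of_eq (congrArg (2 * ·) ?_))
  refine sum_congr rfl fun i _ ↦ ?_
  rw [card_filter_dyadicBox_lastExponent hv fun p ↦ eval p _ = _]
  refine sum_congr rfl fun j _ ↦ ?_
  rw [card_eval_graphPolynomial_eq, ← mul_assoc, ← mul_assoc]
  -- `Fin.snoc` unfolds to the case distinction on `t < n - 1`.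
  rfl
end
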